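/- arXiv:1404.3821 — 4 statements merged into one kernel-verified Lean document; each statement's English description precedes it below -/
import Mathlib

section
/- Let 𝓓 = (Ω, 𝓑) be a β(i) design with parameter (v, k, d), where v ≤ 2k, k−d ≥ i+2, d > 0 and i ≥ 17. If 𝓓 is also a β(i+1) design, then 2i−6 ≤ k−d ≤ 2i. -/
open Finset

variable {α : Type*} [Fintype α] [DecidableEq α]

/-- `𝓑` is a design on the finite type `α` of cardinality `v`, with block size `k` and
maximal pairwise block intersection size `d`. -/
def IsDesign (𝓑 : Finset (Finset α)) (v k d : ℕ) : Prop :=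
  Fintype.card α = v ∧ 2 ≤ 𝓑.card ∧ d < k ∧ k < v ∧
  (∀ B ∈ 𝓑, B.card = k) ∧
  (∀ B ∈ 𝓑, ∀ C ∈ 𝓑, B ≠ C → (B ∩ C).card ≤ d) ∧
  (∃ B ∈ 𝓑, ∃ C ∈ 𝓑, B ≠ C ∧ (B ∩ C).card = d)

/-- `𝓑` is a `β(i)` design with parameters `(v, k, d)`: a design such that
`1 ≤ i ≤ (v - d + 1)/2` and every `(d + 2i - 1)`-element subset `X` of `Ω` admits a
unique block `B` with `|X ∩ B| ≥ d + i`. -/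
def IsBetaDesign (𝓑 : Finset (Finset α)) (v k d i : ℕ) : Prop :=
  IsDesign 𝓑 v k d ∧ 1 ≤ i ∧ 2 * i ≤ v - d + 1 ∧
  ∀ X : Finset α, X.card = d + 2 * i - 1 →
    ∃! B, B ∈ 𝓑 ∧ d + i ≤ (X ∩ B).card

lemma loc_unique {𝓑 : Finset (Finset α)} {v k d j : ℕ} (hB : IsBetaDesign 𝓑 v k d j)
    {B0 Y Z : Finset α} (hB0 : B0 ∈ 𝓑) (hY : Y ⊆ B0) (hYc : Y.card + 1 = d + j)
    (hZ : Disjoint Z B0) (hZc : Z.card = j) :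
    ∃! C, C ∈ 𝓑 ∧ C ≠ B0 ∧ Z ⊆ C ∧ (C ∩ B0).card = d ∧ C ∩ B0 ⊆ Y := by
  obtain ⟨⟨_, _, _, _, _, hinter, _⟩, hj, _, hX⟩ := hB
  have hYZ : Disjoint Y Z := (hZ.mono_right hY).symm
  have iff : ∀ C ∈ 𝓑, (d + j ≤ ((Y ∪ Z) ∩ C).card ↔
      (C ≠ B0 ∧ Z ⊆ C ∧ (C ∩ B0).card = d ∧ C ∩ B0 ⊆ Y)) := by
    intro C hC
    have e : ((Y ∪ Z) ∩ C).card = (Y ∩ C).card + (Z ∩ C).card := by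
      rw [Finset.union_inter_distrib_right, Finset.card_union_of_disjoint]
      exact hYZ.mono Finset.inter_subset_left Finset.inter_subset_left
    have hZle : (Z ∩ C).card ≤ j := hZc ▸ Finset.card_le_card Finset.inter_subset_left
    have hsub : Y ∩ C ⊆ C ∩ B0 := fun x hx => by
      rw [Finset.mem_inter] at hx ⊢; exact ⟨hx.2, hY hx.1⟩
    have hYle := Finset.card_le_card hsub
    constructor
    · intro h
      rw [e] at h
      have hne : C ≠ B0 := by
        rintro rfl
        have : Z ∩ C = ∅ := Finset.disjoint_iff_inter_eq_empty.1 hZ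
        rw [this, Finset.card_empty] at h
        have : (Y ∩ C).card ≤ Y.card := Finset.card_le_card Finset.inter_subset_left
        omega
      have hd := hinter C hC B0 hB0 hne
      refine ⟨hne, ?_, by omega, ?_⟩
      · have : Z ∩ C = Z := Finset.eq_of_subset_of_card_le Finset.inter_subset_left (by omega)
        exact Finset.inter_eq_left.1 this
      · have : Y ∩ C = C ∩ B0 := Finset.eq_of_subset_of_card_le hsub (by omega)
        rw [← this]; exact Finset.inter_subset_left
    · rintro ⟨hne, hZC, hd, hCY⟩
      rw [e, Finset.inter_eq_left.2 hZC, hZc]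
      have : C ∩ B0 ⊆ Y ∩ C := fun x hx =>
        Finset.mem_inter.2 ⟨hCY hx, (Finset.mem_inter.1 hx).1⟩
      have := Finset.card_le_card this
      omega
  have hc : (Y ∪ Z).card = d + 2 * j - 1 := by
    rw [Finset.card_union_of_disjoint hYZ]; omega
  obtain ⟨C, ⟨hC, hC1⟩, huniq⟩ := hX _ hc
  refine ⟨C, ⟨hC, (iff C hC).1 hC1⟩, ?_⟩
  rintro D ⟨hD, hD1⟩
  exact huniq D ⟨hD, (iff D hD).2 hD1⟩

/-- blocks through `Z` avoiding `P` and meeting `B0` in `d` points -/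
def FF (𝓑 : Finset (Finset α)) (d : ℕ) (B0 P Z : Finset α) : Finset (Finset α) :=
  𝓑.filter fun C => C ≠ B0 ∧ Z ⊆ C ∧ (C ∩ B0).card = d ∧ Disjoint C P

lemma loc_count1 {𝓑 : Finset (Finset α)} {v k d j s : ℕ} (hB : IsBetaDesign 𝓑 v k d j)
    (hk : k = d + j + s)
    {B0 P Z : Finset α} (hB0 : B0 ∈ 𝓑) (hP : P ⊆ B0) (hPc : P.card = s)
    (hZ : Disjoint Z B0) (hZc : Z.card = j) :
    (FF 𝓑 d B0 P Z).card * j = d + j := by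
  have hB0k : B0.card = k := hB.1.2.2.2.2.1 B0 hB0
  have hBP : (B0 \ P).card = d + j := by
    rw [Finset.card_sdiff_of_subset hP]; omega
  have h1 : ∑ C ∈ FF 𝓑 d B0 P Z, ((B0 \ P).filter (fun q => q ∉ C)).card
      = ∑ q ∈ B0 \ P, ((FF 𝓑 d B0 P Z).filter (fun C => q ∉ C)).card := by
    simp only [Finset.card_filter]
    exact Finset.sum_comm
  have h2 : ∀ C ∈ FF 𝓑 d B0 P Z, ((B0 \ P).filter (fun q => q ∉ C)).card = j := by
    intro C hC
    obtain ⟨hC1, hC2, hC3, hC4, hC5⟩ := Finset.mem_filter.1 hC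
    have e := Finset.card_sdiff_add_card_inter (B0 \ P) C
    have e1 : (B0 \ P) ∩ C = C ∩ B0 := by
      ext x
      have : x ∈ C → x ∉ P := fun h => Finset.disjoint_left.1 hC5 h
      simp only [mem_inter, mem_sdiff]
      tauto
    have e2 : (B0 \ P).filter (fun q => q ∉ C) = (B0 \ P) \ C := by
      ext x; simp only [mem_filter, mem_sdiff]
    rw [e1] at e
    rw [e2]; omega
  have h3 : ∀ q ∈ B0 \ P, ((FF 𝓑 d B0 P Z).filter (fun C => q ∉ C)).card = 1 := by
    intro q hq
    have hY : (B0 \ P).erase q ⊆ B0 := (Finset.erase_subset _ _).trans Finset.sdiff_subset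
    have hYc : ((B0 \ P).erase q).card + 1 = d + j := by
      rw [Finset.card_erase_add_one hq, hBP]
    obtain ⟨C, ⟨hC1, hC2, hC3, hC4, hC5⟩, hu⟩ := loc_unique hB hB0 hY hYc hZ hZc
    rw [Finset.card_eq_one]
    refine ⟨C, ?_⟩
    ext D
    rw [Finset.mem_singleton, Finset.mem_filter, FF, Finset.mem_filter]
    have hq' := Finset.mem_sdiff.1 hq
    constructor
    · rintro ⟨⟨a1, a2, a3, a4, a5⟩, a6⟩
      refine hu D ⟨a1, a2, a3, a4, ?_⟩
      intro x hx
      rw [Finset.mem_inter] at hx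
      rw [Finset.mem_erase, Finset.mem_sdiff]
      refine ⟨?_, hx.2, fun h => Finset.disjoint_left.1 a5 hx.1 h⟩
      rintro rfl; exact a6 hx.1
    · rintro rfl
      refine ⟨⟨hC1, hC2, hC3, hC4, ?_⟩, ?_⟩
      · rw [Finset.disjoint_left]
        intro x hx hxP
        have := hC5 (Finset.mem_inter.2 ⟨hx, hP hxP⟩)
        rw [Finset.mem_erase, Finset.mem_sdiff] at this
        exact this.2.2 hxP
      · intro h
        have := hC5 (Finset.mem_inter.2 ⟨h, hq'.1⟩)
        rw [Finset.mem_erase] at this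
        exact this.1 rfl
  rw [Finset.sum_congr rfl h2, Finset.sum_congr rfl h3, Finset.sum_const, Finset.sum_const,
    hBP] at h1
  simpa using h1

lemma loc_count2 {𝓑 : Finset (Finset α)} {v k d j s V : ℕ} (hB : IsBetaDesign 𝓑 v k d (j + 1))
    (hk : k = d + j + s) (hV : v = k + V)
    {B0 P Z : Finset α} (hB0 : B0 ∈ 𝓑) (hP : P ⊆ B0) (hPc : P.card = s)
    (hZ : Disjoint Z B0) (hZc : Z.card = j) :
    (FF 𝓑 d B0 P Z).card * s + j = V := by
  have hB0k : B0.card = k := hB.1.2.2.2.2.1 B0 hB0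
  have hBP : (B0 \ P).card = d + j := by
    rw [Finset.card_sdiff_of_subset hP]; omega
  have hZsub : Z ⊆ B0ᶜ := fun x hx => by
    rw [Finset.mem_compl]; exact Finset.disjoint_left.1 hZ hx
  have hcc : (B0ᶜ \ Z).card + j = V := by
    have := Finset.card_sdiff_add_card_eq_card hZsub
    rw [Finset.card_compl, hB0k, hB.1.1] at this
    omega
  have h1 : ∑ C ∈ FF 𝓑 d B0 P Z, ((B0ᶜ \ Z).filter (fun q => q ∈ C)).card
      = ∑ q ∈ B0ᶜ \ Z, ((FF 𝓑 d B0 P Z).filter (fun C => q ∈ C)).card := by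
    simp only [Finset.card_filter]
    exact Finset.sum_comm
  have h2 : ∀ C ∈ FF 𝓑 d B0 P Z, ((B0ᶜ \ Z).filter (fun q => q ∈ C)).card = s := by
    intro C hC
    obtain ⟨hC1, hC2, hC3, hC4, hC5⟩ := Finset.mem_filter.1 hC
    have e := Finset.card_sdiff_add_card_inter C B0
    have hCk : C.card = k := hB.1.2.2.2.2.1 C hC1
    have e1 : Z ⊆ C \ B0 := fun x hx =>
      Finset.mem_sdiff.2 ⟨hC3 hx, Finset.disjoint_left.1 hZ hx⟩
    have e3 := Finset.card_sdiff_add_card_eq_card e1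
    have e2 : (B0ᶜ \ Z).filter (fun q => q ∈ C) = (C \ B0) \ Z := by
      ext x; simp only [mem_filter, mem_sdiff, mem_compl]; tauto
    rw [e2]; omega
  have h3 : ∀ q ∈ B0ᶜ \ Z, ((FF 𝓑 d B0 P Z).filter (fun C => q ∈ C)).card = 1 := by
    intro q hq
    have hq' := Finset.mem_sdiff.1 hq
    rw [Finset.mem_compl] at hq'
    have hZ' : Disjoint (insert q Z) B0 := by
      rw [Finset.disjoint_insert_left]; exact ⟨hq'.1, hZ⟩
    have hZc' : (insert q Z).card = j + 1 := by
      rw [Finset.card_insert_of_notMem hq'.2, hZc]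
    obtain ⟨C, ⟨hC1, hC2, hC3, hC4, hC5⟩, hu⟩ :=
      loc_unique hB hB0 (Finset.sdiff_subset (s := B0) (t := P)) (by omega) hZ' hZc'
    rw [Finset.card_eq_one]
    refine ⟨C, ?_⟩
    ext D
    rw [Finset.mem_singleton, Finset.mem_filter, FF, Finset.mem_filter]
    constructor
    · rintro ⟨⟨a1, a2, a3, a4, a5⟩, a6⟩
      refine hu D ⟨a1, a2, Finset.insert_subset a6 a3, a4, ?_⟩
      intro x hx
      rw [Finset.mem_inter] at hx
      rw [Finset.mem_sdiff]
      exact ⟨hx.2, fun h => Finset.disjoint_left.1 a5 hx.1 h⟩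
    · rintro rfl
      rw [Finset.insert_subset_iff] at hC3
      refine ⟨⟨hC1, hC2, hC3.2, hC4, ?_⟩, hC3.1⟩
      rw [Finset.disjoint_left]
      intro x hx hxP
      have := hC5 (Finset.mem_inter.2 ⟨hx, hP hxP⟩)
      rw [Finset.mem_sdiff] at this
      exact this.2 hxP
  rw [Finset.sum_congr rfl h2, Finset.sum_congr rfl h3, Finset.sum_const, Finset.sum_const] at h1
  simp only [smul_eq_mul, mul_one] at h1
  omega

lemma loc_main {𝓑 : Finset (Finset α)} {v k d i s V : ℕ} (hB : IsBetaDesign 𝓑 v k d i)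
    (hB' : IsBetaDesign 𝓑 v k d (i + 1)) (hk : k = d + i + s) (hV : v = k + V) (hs : 2 ≤ s)
    (hd : 0 < d) (hi : 1 ≤ i) :
    ∃ m : ℕ, d = i * m ∧ V = i + s + s * m ∧ i + 1 ≤ m := by
  obtain ⟨B0, hB0, C, hC, hne, hcard⟩ := hB.1.2.2.2.2.2.2
  have hB0k : B0.card = k := hB.1.2.2.2.2.1 B0 hB0
  have hCk : C.card = k := hB.1.2.2.2.2.1 C hC
  have hKc : (C \ B0).card = i + s := by
    have := Finset.card_sdiff_add_card_inter C B0
    rw [Finset.inter_comm] at this; omega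
  obtain ⟨P, hP, hPc⟩ := Finset.exists_subset_card_eq (show s ≤ B0.card by omega)
  obtain ⟨P', hP', hPc'⟩ := Finset.exists_subset_card_eq (show s - 1 ≤ B0.card by omega)
  obtain ⟨Z, hZ, hZc⟩ := Finset.exists_subset_card_eq (show i ≤ (C \ B0).card by omega)
  obtain ⟨Z', hZ', hZc'⟩ := Finset.exists_subset_card_eq (show i + 1 ≤ (C \ B0).card by omega)
  have hdis : Disjoint (C \ B0) B0 := Finset.sdiff_disjoint
  have c1 := loc_count1 hB hk hB0 hP hPc (hdis.mono_left hZ) hZc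
  have c2 := loc_count2 hB' hk hV hB0 hP hPc (hdis.mono_left hZ) hZc
  have c3 := loc_count1 hB' (s := s - 1) (by omega) hB0 hP' hPc' (hdis.mono_left hZ') hZc'
  set N := (FF 𝓑 d B0 P Z).card
  set N' := (FF 𝓑 d B0 P' Z').card
  obtain ⟨m, hm⟩ : ∃ m, N = m + 1 := by
    cases hN : N with
    | zero => rw [hN] at c1; omega
    | succ m => exact ⟨m, rfl⟩
  rw [hm] at c1 c2
  have hdm : d = i * m := by nlinarith
  refine ⟨m, hdm, by nlinarith, ?_⟩
  have hdvd : (i + 1) ∣ i * m := by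
    rw [← hdm]
    have : (i + 1) ∣ d + (i + 1) := ⟨N', by rw [← c3]; ring⟩
    exact (Nat.dvd_add_left (dvd_refl _)).1 this
  have hcop : Nat.Coprime (i + 1) i := by simp
  have := hcop.dvd_of_dvd_mul_left hdvd
  refine Nat.le_of_dvd ?_ this
  rcases Nat.eq_zero_or_pos m with h | h
  · rw [h] at hdm; omega
  · exact h

/-- the `k`-subsets -/
abbrev Lev (α : Type*) (k : ℕ) := {B : Finset α // B.card = k}

noncomputable section JJ

/-- distance-function matrix in the Johnson scheme -/
def JM (α : Type*) [Fintype α] [DecidableEq α] (k : ℕ) (h : ℕ → ℝ) :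
    Matrix (Lev α k) (Lev α k) ℝ :=
  Matrix.of fun C B => h (C.1 \ B.1).card

def Jell (k V : ℕ) : ℕ → ℝ := fun e => if e = 0 then (k : ℝ) * V else if e = 1 then -1 else 0

def JLam (k V : ℕ) (h : ℕ → ℝ) : ℕ → ℝ := fun e =>
  (e : ℝ) ^ 2 * (h e - h (e - 1)) + ((k : ℝ) - e) * ((V : ℝ) - e) * (h e - h (e + 1))

end JJ

lemma Jcard_symm {k : ℕ} (C B : Lev α k) : (C.1 \ B.1).card = (B.1 \ C.1).card := by
  have h1 := Finset.card_sdiff_add_card_inter C.1 B.1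
  have h2 := Finset.card_sdiff_add_card_inter B.1 C.1
  rw [Finset.inter_comm] at h2
  have := C.2; have := B.2
  omega

lemma Jzero_iff {k : ℕ} (C B : Lev α k) : (C.1 \ B.1).card = 0 ↔ C = B := by
  rw [Finset.card_eq_zero, Finset.sdiff_eq_empty_iff_subset]
  constructor
  · intro h
    apply Subtype.ext
    exact Finset.eq_of_subset_of_card_le h (by rw [C.2, B.2])
  · rintro rfl; exact Finset.Subset.refl _

lemma Jle_V {k V : ℕ} (hv : Fintype.card α = k + V) (C B : Lev α k) : (C.1 \ B.1).card ≤ V := by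
  have : (C.1 \ B.1).card ≤ (B.1ᶜ).card := Finset.card_le_card (fun x hx => by
    simp at hx ⊢; exact hx.2)
  rw [Finset.card_compl, B.2, hv] at this
  omega

lemma Jnbr_sum {k : ℕ} (C : Lev α k) (F : Finset α → ℝ) :
    ∑ D : Lev α k, (if (C.1 \ D.1).card = 1 then F D.1 else 0)
      = ∑ a ∈ C.1, ∑ b ∈ C.1ᶜ, F (insert b (C.1.erase a)) := by
  classical
  rw [← Finset.sum_filter, ← Finset.sum_product']
  symm
  refine Finset.sum_bij (fun p hp => (⟨insert p.2 (C.1.erase p.1), ?_⟩ : Lev α k)) ?_ ?_ ?_ ?_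
  · have hp' := Finset.mem_product.1 hp
    have h2 := Finset.mem_compl.1 hp'.2
    rw [Finset.card_insert_of_notMem (fun h => h2 (Finset.mem_of_mem_erase h)),
      Finset.card_erase_of_mem hp'.1, C.2]
    have : 0 < C.1.card := Finset.card_pos.2 ⟨_, hp'.1⟩
    rw [C.2] at this
    omega
  · rintro ⟨a, b⟩ hp
    have hp' := Finset.mem_product.1 hp
    simp only [Finset.mem_compl] at hp'
    simp only [Finset.mem_filter, Finset.mem_univ, true_and]
    have : C.1 \ insert b (C.1.erase a) = {a} := by
      ext x; simp only [mem_sdiff, mem_insert, mem_erase, mem_singleton]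
      constructor
      · grind
      · grind
    rw [this, Finset.card_singleton]
  · rintro ⟨a, b⟩ hp ⟨a', b'⟩ hp' h
    have hp1 := Finset.mem_product.1 hp
    have hp2 := Finset.mem_product.1 hp'
    simp only [Finset.mem_compl] at hp1 hp2
    have h' := congrArg Subtype.val h
    simp only at h'
    have e1 : C.1 \ insert b (C.1.erase a) = {a} := by
      ext x; simp only [mem_sdiff, mem_insert, mem_erase, mem_singleton]; grind
    have e2 : C.1 \ insert b' (C.1.erase a') = {a'} := by
      ext x; simp only [mem_sdiff, mem_insert, mem_erase, mem_singleton]; grind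
    have e3 : insert b (C.1.erase a) \ C.1 = {b} := by
      ext x; simp only [mem_sdiff, mem_insert, mem_erase, mem_singleton]; grind
    have e4 : insert b' (C.1.erase a') \ C.1 = {b'} := by
      ext x; simp only [mem_sdiff, mem_insert, mem_erase, mem_singleton]; grind
    rw [h', e2] at e1
    rw [h', e4] at e3
    rw [Finset.singleton_inj] at e1 e3
    rw [e1, e3]
  · intro D hD
    have hD1 := (Finset.mem_filter.1 hD).2
    have hD2 := hD1
    rw [Jcard_symm] at hD2
    obtain ⟨a, ha⟩ := Finset.card_eq_one.1 hD1
    obtain ⟨b, hb⟩ := Finset.card_eq_one.1 hD2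
    have ha' : ∀ x, x ∈ C.1 ∧ x ∉ D.1 ↔ x = a := fun x => by
      rw [← Finset.mem_sdiff, ha, Finset.mem_singleton]
    have hb' : ∀ x, x ∈ D.1 ∧ x ∉ C.1 ↔ x = b := fun x => by
      rw [← Finset.mem_sdiff, hb, Finset.mem_singleton]
    refine ⟨(a, b), ?_, ?_⟩
    · rw [Finset.mem_product, Finset.mem_compl]
      exact ⟨((ha' a).2 rfl).1, ((hb' b).2 rfl).2⟩
    · apply Subtype.ext
      ext x
      simp only [mem_insert, mem_erase]
      have := ha' x; have := hb' x
      tauto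
  · rintro ⟨a, b⟩ hp
    rfl

lemma Jmul {k V : ℕ} (hv : Fintype.card α = k + V) (h : ℕ → ℝ) :
    JM α k (Jell k V) * JM α k h = JM α k (JLam k V h) := by
  ext C B
  rw [Matrix.mul_apply]
  simp only [JM, Matrix.of_apply]
  set ε := (C.1 \ B.1).card with hε
  have e1 : (C.1 ∩ B.1).card = k - ε := by
    have := Finset.card_sdiff_add_card_inter C.1 B.1
    rw [C.2] at this; omega
  have hεk : ε ≤ k := by
    have := Finset.card_sdiff_add_card_inter C.1 B.1
    rw [C.2] at this; omega
  have hεV : ε ≤ V := Jle_V hv C B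
  have e2 : (C.1ᶜ ∩ B.1).card = ε := by
    rw [hε, Jcard_symm]; congr 1; ext x; simp; tauto
  have e3 : (C.1ᶜ \ B.1).card = V - ε := by
    have := Finset.card_sdiff_add_card_inter (C.1ᶜ) B.1
    rw [e2, Finset.card_compl, C.2, hv] at this; omega
  have key : ∀ D : Lev α k, Jell k V (C.1 \ D.1).card * h (D.1 \ B.1).card
      = (if D = C then (k:ℝ) * V * h ε else 0)
        - (if (C.1 \ D.1).card = 1 then h (D.1 \ B.1).card else 0) := by
    intro D
    by_cases hD : D = C
    · subst hD; simp [Jell, hε]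
    · have : (C.1 \ D.1).card ≠ 0 := fun h0 => hD ((Jzero_iff C D).1 h0).symm
      by_cases h1 : (C.1 \ D.1).card = 1 <;> simp [Jell, hD, this, h1]
  rw [Finset.sum_congr rfl (fun D _ => key D), Finset.sum_sub_distrib,
    Jnbr_sum C (fun D => h (D \ B.1).card)]
  simp only [Finset.sum_ite_eq', Finset.mem_univ, if_true]
  have split : ∀ (S : Finset α) (G : α → ℝ),
      ∑ x ∈ S, G x = ∑ x ∈ S \ B.1, G x + ∑ x ∈ S ∩ B.1, G x := fun S G => by
    rw [← Finset.sum_union]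
    · rw [Finset.sdiff_union_inter]
    · exact Finset.disjoint_sdiff_inter _ _
  have c1 : ∀ a ∈ C.1 \ B.1, ∑ b ∈ C.1ᶜ, h (insert b (C.1.erase a) \ B.1).card
      = ((V:ℝ) - ε) * h ε + ε * h (ε - 1) := by
    intro a ha
    have ha' := Finset.mem_sdiff.1 ha
    rw [split]
    congr 1
    · rw [Finset.sum_congr rfl (g := fun _ => h ε), Finset.sum_const, e3, nsmul_eq_mul,
        Nat.cast_sub hεV]
      intro b hb
      have hb' := Finset.mem_sdiff.1 hb
      rw [Finset.mem_compl] at hb'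
      congr 1
      have : insert b (C.1.erase a) \ B.1 = insert b ((C.1 \ B.1).erase a) := by
        ext x; simp only [mem_sdiff, mem_insert, mem_erase]; grind
      rw [this, Finset.card_insert_of_notMem (by simp [hb']), Finset.card_erase_of_mem ha]
      have : 0 < (C.1 \ B.1).card := Finset.card_pos.2 ⟨a, ha⟩
      omega
    · rw [Finset.sum_congr rfl (g := fun _ => h (ε - 1)), Finset.sum_const, e2, nsmul_eq_mul]
      intro b hb
      have hb' := Finset.mem_inter.1 hb
      congr 1
      have : insert b (C.1.erase a) \ B.1 = ((C.1 \ B.1).erase a) := by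
        ext x; simp only [mem_sdiff, mem_insert, mem_erase]; grind
      rw [this, Finset.card_erase_of_mem ha]
  have c2 : ∀ a ∈ C.1 ∩ B.1, ∑ b ∈ C.1ᶜ, h (insert b (C.1.erase a) \ B.1).card
      = ((V:ℝ) - ε) * h (ε + 1) + ε * h ε := by
    intro a ha
    have ha' := Finset.mem_inter.1 ha
    rw [split]
    congr 1
    · rw [Finset.sum_congr rfl (g := fun _ => h (ε + 1)), Finset.sum_const, e3, nsmul_eq_mul,
        Nat.cast_sub hεV]
      intro b hb
      have hb' := Finset.mem_sdiff.1 hb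
      rw [Finset.mem_compl] at hb'
      congr 1
      have : insert b (C.1.erase a) \ B.1 = insert b (C.1 \ B.1) := by
        ext x; simp only [mem_sdiff, mem_insert, mem_erase]; grind
      rw [this, Finset.card_insert_of_notMem (by simp [hb'])]
    · rw [Finset.sum_congr rfl (g := fun _ => h ε), Finset.sum_const, e2, nsmul_eq_mul]
      intro b hb
      have hb' := Finset.mem_inter.1 hb
      congr 1
      have : insert b (C.1.erase a) \ B.1 = C.1 \ B.1 := by
        ext x; simp only [mem_sdiff, mem_insert, mem_erase]; grind
      rw [this]
  rw [split C.1, Finset.sum_congr rfl c1, Finset.sum_congr rfl c2, Finset.sum_const,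
    Finset.sum_const, e1, ← hε, nsmul_eq_mul, nsmul_eq_mul, Nat.cast_sub hεk]
  simp only [JLam]
  ring

noncomputable def Jh (V r : ℕ) : ℕ → ℝ := fun e => if e ≤ r then ((V - e).choose (r - e) : ℝ) else 0

lemma Jh_rec (k V r e : ℕ) (he : e ≤ V) :
    ((k : ℝ) + r + 1) * ((V : ℝ) - r) * Jh V r e - JLam k V (Jh V r) e
      = ((r : ℝ) + 1) ^ 2 * Jh V (r + 1) e := by
  rcases Nat.lt_trichotomy e (r + 1) with h | h | h
  · obtain ⟨j, rfl⟩ := Nat.exists_eq_add_of_le (Nat.lt_succ_iff.1 h)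
    obtain ⟨W, rfl⟩ := Nat.exists_eq_add_of_le he
    have a1 : Jh (e + W) (e + j) e = (W.choose j : ℝ) := by
      simp [Jh]
    have a2 : Jh (e + W) (e + j + 1) e = (W.choose (j + 1) : ℝ) := by
      simp only [Jh]
      rw [if_pos (by omega)]
      congr 2 <;> omega
    have a3 : (e : ℝ) * Jh (e + W) (e + j) (e - 1) = e * (W.choose j + W.choose (j + 1)) := by
      rcases Nat.eq_zero_or_pos e with h0 | h0
      · simp [h0]
      · congr 1
        simp only [Jh]
        rw [if_pos (by omega)]
        have : (e + W - (e - 1)).choose (e + j - (e - 1)) = (W + 1).choose (j + 1) := by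
          congr 1 <;> omega
        rw [this, Nat.choose_succ_succ]; push_cast; ring
    have a4 : (W : ℝ) * Jh (e + W) (e + j) (e + 1) = j * W.choose j := by
      simp only [Jh]
      rcases j with _ | j
      · simp
      · rw [if_pos (by omega)]
        rcases W with _ | W
        · simp
        · have : (e + (W + 1) - (e + 1)).choose (e + (j + 1) - (e + 1)) = W.choose j := by
            congr 1 <;> omega
          rw [this]
          have := Nat.add_one_mul_choose_eq W j
          have h2 : (((W + 1) * W.choose j : ℕ) : ℝ) = ((W + 1).choose (j + 1) * (j + 1) : ℕ) := by
            rw [this]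
          push_cast at h2 ⊢
          linarith
    have a5 : ((j : ℝ) + 1) * W.choose (j + 1) = ((W : ℝ) - j) * W.choose j := by
      have h3 := Nat.choose_succ_right_eq W j
      rcases Nat.lt_or_ge W j with h1 | h1
      · rw [Nat.choose_eq_zero_of_lt h1, Nat.choose_eq_zero_of_lt (by omega)]; simp
      · have h2 : ((W.choose (j + 1) * (j + 1) : ℕ) : ℝ) = (W.choose j * (W - j) : ℕ) := by
          rw [h3]
        push_cast [Nat.cast_sub h1] at h2
        linarith
    simp only [JLam]
    rw [a1, a2]
    push_cast
    linear_combination (e : ℝ) * a3 + ((k : ℝ) - e) * a4 - (2 * (e : ℝ) + j + 1) * a5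
  · subst h
    simp [JLam, Jh]
  · have b1 : ¬ (e ≤ r) := by omega
    have b2 : ¬ (e ≤ r + 1) := by omega
    have b3 : ¬ (e - 1 ≤ r) := by omega
    have b4 : ¬ (e + 1 ≤ r) := by omega
    simp only [JLam, Jh, b1, b2, b3, b4, if_false]
    ring

lemma vand (W M : ℕ) (h : M < W) :
    ∑ j ∈ range (M + 1), (-1 : ℝ) ^ (M - j) * ((W - 1 - j).choose (M - j) : ℝ) * (W.choose j : ℝ)
      = 1 := by
  have key := Ring.add_choose_eq (R := ℤ) (r := (W : ℤ)) (s := (M : ℤ) - W) M (Commute.all _ _)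
  have e1 : (W : ℤ) + ((M : ℤ) - W) = (M : ℕ) := by ring
  rw [e1, Ring.choose_natCast, Nat.choose_self, Finset.Nat.sum_antidiagonal_eq_sum_range_succ_mk] at key
  have key2 : ∑ j ∈ range (M + 1),
      ((-1 : ℤ) ^ (M - j) * ((W - 1 - j).choose (M - j) : ℤ) * (W.choose j : ℤ)) = 1 := by
    refine Eq.trans ?_ (key.symm.trans Nat.cast_one)
    apply Finset.sum_congr rfl
    intro j hj
    have hj' : j ≤ M := by have := Finset.mem_range.1 hj; omega
    have e2 : (M : ℤ) - W = - ((W - M : ℕ) : ℤ) := by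
      rw [Nat.cast_sub h.le]; ring
    simp only
    rw [Ring.choose_natCast, e2, Ring.choose_neg]
    have e3 : ((W - M : ℕ) : ℤ) + ((M - j : ℕ) : ℤ) - 1 = ((W - 1 - j : ℕ) : ℤ) := by omega
    rw [e3, Ring.choose_natCast]
    simp [Int.negOnePow, Units.smul_def]
    ring
  exact_mod_cast key2

lemma vand' (V g s e : ℕ) (hg : g ≤ e) (he : e ≤ V) (hs : g + s < V) :
    ∑ t ∈ range (s + 1), (-1 : ℝ) ^ (s - t) * ((V - 1 - (g + t)).choose (s - t) : ℝ) * Jh V (g + t) e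
      = if e ≤ g + s then 1 else 0 := by
  split_ifs with h
  · obtain ⟨u, rfl⟩ := Nat.exists_eq_add_of_le hg
    obtain ⟨M, hM⟩ := Nat.exists_eq_add_of_le (show u ≤ s by omega)
    subst hM
    refine Eq.trans ?_ (vand (V - (g + u)) M (by omega))
    rw [show u + M + 1 = u + (M + 1) by ring,
      Finset.sum_range_add]
    rw [Finset.sum_eq_zero, zero_add]
    · apply Finset.sum_congr rfl
      intro j hj
      have := Finset.mem_range.1 hj
      simp only [Jh]
      rw [if_pos (by omega)]
      rw [show u + M - (u + j) = M - j by omega,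
        show V - 1 - (g + (u + j)) = V - (g + u) - 1 - j by omega,
        show g + (u + j) - (g + u) = j by omega]
    · intro j hj
      have := Finset.mem_range.1 hj
      simp only [Jh]
      rw [if_neg (by omega), mul_zero]
  · apply Finset.sum_eq_zero
    intro j hj
    have := Finset.mem_range.1 hj
    simp only [Jh]
    rw [if_neg (by omega), mul_zero]

lemma spec_key {n : Type*} [Fintype n] [DecidableEq n] (A : Matrix n n ℝ) (hA : A.IsHermitian)
    (Ψ R f : Polynomial ℝ) (S : Finset n)
    (hΨ : Polynomial.aeval A Ψ = 0)
    (hR : ∀ C, ∑ B ∈ S, (Polynomial.aeval A R) C B = 0)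
    (hf : ∀ x, Ψ.eval x = 0 → 0 ≤ f.eval x)
    (hf0 : ∀ x, Ψ.eval x = 0 → R.eval x = 0 → f.eval x = 0)
    (hoff : ∀ B ∈ S, ∀ C ∈ S, B ≠ C → (Polynomial.aeval A f) B C = 0) :
    ∀ B ∈ S, ∀ C, (Polynomial.aeval A f) C B = 0 := by
  obtain ⟨U, l, hU, hU', hAU⟩ : ∃ (U : Matrix n n ℝ) (l : n → ℝ), U * U.transpose = 1 ∧
      U.transpose * U = 1 ∧ A = U * Matrix.diagonal l * U.transpose := by
    refine ⟨hA.eigenvectorUnitary, hA.eigenvalues, ?_, ?_, ?_⟩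
    · exact (Matrix.mem_unitaryGroup_iff (A := (hA.eigenvectorUnitary : Matrix n n ℝ))).1
        hA.eigenvectorUnitary.2
    · exact (Matrix.mem_unitaryGroup_iff' (A := (hA.eigenvectorUnitary : Matrix n n ℝ))).1
        hA.eigenvectorUnitary.2
    · have := hA.spectral_theorem
      rw [Unitary.conjStarAlgAut_apply] at this
      exact this
  have hpow : ∀ r : ℕ, A ^ r = U * Matrix.diagonal (fun j => l j ^ r) * U.transpose := by
    intro r
    induction r with
    | zero => simp [hU]
    | succ r ih =>
      rw [pow_succ, ih]
      nth_rw 1 [hAU]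
      calc _ = U * Matrix.diagonal (fun j => l j ^ r) * (U.transpose * U) * Matrix.diagonal l * U.transpose := by
            simp only [Matrix.mul_assoc]
        _ = _ := by
            rw [hU', Matrix.mul_one, Matrix.mul_assoc U, Matrix.diagonal_mul_diagonal]
            simp only [pow_succ]
  have hent : ∀ (P : Polynomial ℝ) (C B : n),
      (Polynomial.aeval A P) C B = ∑ j, P.eval (l j) * (U C j * U B j) := by
    intro P C B
    have hp1 : ∀ r : ℕ, (A ^ r) C B = ∑ j, l j ^ r * (U C j * U B j) := by
      intro r
      rw [hpow, Matrix.mul_apply]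
      apply Finset.sum_congr rfl
      intro j _
      rw [Matrix.mul_diagonal, Matrix.transpose_apply]; ring
    rw [Polynomial.aeval_eq_sum_range, Matrix.sum_apply]
    simp only [Matrix.smul_apply, hp1, smul_eq_mul, Polynomial.eval_eq_sum_range]
    simp only [Finset.mul_sum, Finset.sum_mul]
    rw [Finset.sum_comm]
    simp only [mul_assoc]
  have horth : ∀ j j', ∑ C, U C j * U C j' = if j = j' then 1 else 0 := by
    intro j j'
    have := congrFun (congrFun hU' j) j'
    rw [Matrix.mul_apply, Matrix.one_apply] at this
    simpa using this
  have hl : ∀ j, Ψ.eval (l j) = 0 := by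
    intro j
    have h1 : ∑ C, ∑ B, U C j * U B j * (Polynomial.aeval A Ψ) C B = Ψ.eval (l j) := by
      simp only [hent, Finset.mul_sum]
      calc _ = ∑ C, ∑ j', ∑ B, U C j * U B j * (Ψ.eval (l j') * (U C j' * U B j')) := by
            apply Finset.sum_congr rfl; intro C _; rw [Finset.sum_comm]
        _ = ∑ j', Ψ.eval (l j') * ((∑ C, U C j * U C j') * (∑ B, U B j * U B j')) := by
            rw [Finset.sum_comm]
            apply Finset.sum_congr rfl; intro j' _
            rw [Finset.sum_mul_sum, Finset.mul_sum]
            apply Finset.sum_congr rfl; intro C _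
            rw [Finset.mul_sum]
            apply Finset.sum_congr rfl; intro B _
            ring
        _ = _ := by
            simp [horth]
    rw [hΨ] at h1
    simpa using h1.symm
  set y : n → ℝ := fun j => ∑ B ∈ S, U B j with hy
  have hRy : ∀ j, R.eval (l j) * y j = 0 := by
    intro j
    have h1 : ∑ C, U C j * ∑ B ∈ S, (Polynomial.aeval A R) C B = R.eval (l j) * y j := by
      simp only [hent]
      calc _ = ∑ C, ∑ j', U C j * (R.eval (l j') * (U C j' * y j')) := by
            apply Finset.sum_congr rfl; intro C _
            rw [Finset.sum_comm, Finset.mul_sum]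
            apply Finset.sum_congr rfl; intro j' _
            rw [hy]; simp only [Finset.mul_sum]
        _ = ∑ j', R.eval (l j') * y j' * ∑ C, U C j * U C j' := by
            rw [Finset.sum_comm]
            apply Finset.sum_congr rfl; intro j' _
            rw [Finset.mul_sum]
            apply Finset.sum_congr rfl; intro B _
            ring
        _ = _ := by
            simp [horth]
    rw [← h1]
    simp [hR]
  have hfy : ∀ j, f.eval (l j) * y j = 0 := by
    intro j
    rcases mul_eq_zero.1 (hRy j) with h | h
    · rw [hf0 _ (hl j) h, zero_mul]
    · rw [h, mul_zero]
  have hsum : ∑ B ∈ S, ∑ C ∈ S, (Polynomial.aeval A f) B C = 0 := by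
    apply Finset.sum_eq_zero
    intro B _
    simp only [hent]
    rw [Finset.sum_comm]
    apply Finset.sum_eq_zero
    intro j _
    calc _ = U B j * (f.eval (l j) * y j) := by
          rw [hy]; simp only [Finset.mul_sum]
          apply Finset.sum_congr rfl; intro _ _; ring
      _ = 0 := by rw [hfy, mul_zero]
  have hdiag : ∑ B ∈ S, (Polynomial.aeval A f) B B = 0 := by
    rw [← hsum]
    apply Finset.sum_congr rfl
    intro B hB
    rw [Finset.sum_eq_single_of_mem B hB]
    intro C hC hne
    exact hoff B hB C hC hne.symm
  have hnn : ∀ B j, 0 ≤ f.eval (l j) * (U B j * U B j) := fun B j =>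
    mul_nonneg (hf _ (hl j)) (mul_self_nonneg _)
  intro B hB C
  have hBB : (Polynomial.aeval A f) B B = 0 := by
    refine (Finset.sum_eq_zero_iff_of_nonneg ?_).1 hdiag B hB
    intro B _
    rw [hent]
    exact Finset.sum_nonneg (fun j _ => hnn B j)
  rw [hent] at hBB ⊢
  apply Finset.sum_eq_zero
  intro j _
  have := (Finset.sum_eq_zero_iff_of_nonneg (fun j _ => hnn B j)).1 hBB j (Finset.mem_univ j)
  rcases mul_eq_zero.1 this with h | h
  · rw [h, zero_mul]
  · rw [mul_self_eq_zero.1 h, mul_zero, mul_zero]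

/-- the normalised coefficients -/
noncomputable def Tc (s a n : ℝ) (t : ℕ) : ℝ :=
  ∏ l ∈ range t, (-(s - l) / ((s * n - l) * (a + l) * (l + 1)))

noncomputable def TY (a n : ℝ) (u t : ℕ) : ℝ :=
  ∏ l ∈ range t, (((u : ℝ) - l) * (a * n + u - 1 + l))

noncomputable def TT (s a n : ℝ) (u : ℕ) : ℝ := ∑ t ∈ range (u + 1), Tc s a n t * TY a n u t

noncomputable def N3 (s a n : ℝ) : ℝ :=
  (s*n)*a*((s*n-1)*(a+1)*2)*((s*n-2)*(a+2)*3)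
  - s*(3*(a*n+2))*(((s*n-1)*(a+1)*2)*((s*n-2)*(a+2)*3))
  + s*(3*(a*n+2))*((s-1)*(2*(a*n+3)))*((s*n-2)*(a+2)*3)
  - s*(3*(a*n+2))*((s-1)*(2*(a*n+3)))*((s-2)*(a*n+4))

noncomputable def N4 (s a n : ℝ) : ℝ :=
  (s*n)*a*((s*n-1)*(a+1)*2)*((s*n-2)*(a+2)*3)*((s*n-3)*(a+3)*4)
  - s*(4*(a*n+3))*(((s*n-1)*(a+1)*2)*((s*n-2)*(a+2)*3)*((s*n-3)*(a+3)*4))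
  + s*(4*(a*n+3))*((s-1)*(3*(a*n+4)))*(((s*n-2)*(a+2)*3)*((s*n-3)*(a+3)*4))
  - s*(4*(a*n+3))*((s-1)*(3*(a*n+4)))*((s-2)*(2*(a*n+5)))*((s*n-3)*(a+3)*4)
  + s*(4*(a*n+3))*((s-1)*(3*(a*n+4)))*((s-2)*(2*(a*n+5)))*((s-3)*(a*n+6))

lemma TT3 (s a n : ℝ) (hs : 2 ≤ s) (ha : 0 < a) (hn : 2 < n) (h : N3 s a n < 0) : TT s a n 3 < 0 := by
  have h0 : 4 < s * n := by nlinarith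
  have h1 : 0 < s * n - 1 := by linarith
  have h2 : 0 < s * n - 2 := by linarith
  have e : TT s a n 3 = N3 s a n / ((s*n)*a*((s*n-1)*(a+1)*2)*((s*n-2)*(a+2)*3)) := by
    rw [eq_div_iff (by positivity)]
    have := h0.ne'
    simp only [TT, Tc, TY, Finset.sum_range_succ, Finset.prod_range_succ, N3, Finset.sum_range_zero, Finset.prod_range_zero]
    push_cast
    have k0 : s ≠ 0 := by linarith
    have k1 : n ≠ 0 := by linarith
    have k2 := h1.ne'
    have k3 := h2.ne'
    have k4 : a + 1 ≠ 0 := by positivity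
    have k5 : a + 2 ≠ 0 := by positivity
    simp only [sub_zero, add_zero, zero_add]
    field_simp
    ring
  rw [e]
  exact div_neg_of_neg_of_pos h (by positivity)

lemma TT4 (s a n : ℝ) (hs : 2 ≤ s) (ha : 0 < a) (hn : 2 < n) :
    ∃ D : ℝ, 0 < D ∧ TT s a n 4 = N4 s a n / D := by
  have h0 : 4 < s * n := by nlinarith
  have h1 : 0 < s * n - 1 := by linarith
  have h2 : 0 < s * n - 2 := by linarith
  have h3 : 0 < s * n - 3 := by linarith
  refine ⟨((s*n)*a*((s*n-1)*(a+1)*2)*((s*n-2)*(a+2)*3)*((s*n-3)*(a+3)*4)), by positivity, ?_⟩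
  rw [eq_div_iff (by positivity)]
  have := h0.ne'
  simp only [TT, Tc, TY, Finset.sum_range_succ, Finset.prod_range_succ, N4, Finset.sum_range_zero, Finset.prod_range_zero]
  push_cast
  have k0 : s ≠ 0 := by linarith
  have k1 : n ≠ 0 := by linarith
  have k2 := h1.ne'
  have k3 := h2.ne'
  have k3' := h3.ne'
  have k4 : a + 1 ≠ 0 := by positivity
  have k5 : a + 2 ≠ 0 := by positivity
  have k6 : a + 3 ≠ 0 := by positivity
  simp only [sub_zero, add_zero, zero_add]
  field_simp
  ring

lemma N3_big (x y z : ℝ) (hx : 0 ≤ x) (hy : 0 ≤ y) (hz : 0 < z) : N3 (10 + y) (7 + x) (2 + z) < 0 := by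
  rw [← neg_pos]
  unfold N3
  ring_nf
  positivity

lemma N4_big (x y z : ℝ) (hx : 0 ≤ x) (hy : 0 ≤ y) (hz : 0 < z) : 0 < N4 (10 + y) (7 + x) (2 + z) := by
  unfold N4
  ring_nf
  positivity

lemma N34_small (s : ℕ) (h1 : 3 ≤ s) (h2 : s ≤ 9) (x z : ℝ) (hx : 0 ≤ x) (hz : 0 < z) :
    N3 s (17 - s + x) (2 + z) < 0 ∧ 0 < N4 s (17 - s + x) (2 + z) := by
  rw [← neg_pos]
  unfold N3 N4
  interval_cases s <;> (push_cast; constructor <;> (ring_nf; positivity))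

lemma TT_s2_4 (a n : ℝ) (ha : 15 ≤ a) (hn : a + 5 ≤ n) : TT 2 a n 4 < 0 := by
  obtain ⟨D, hD, e⟩ := TT4 2 a n (by norm_num) (by linarith) (by linarith)
  rw [e]
  refine div_neg_of_neg_of_pos ?_ hD
  obtain ⟨x, rfl⟩ : ∃ x, a = 15 + x := ⟨a - 15, by ring⟩
  obtain ⟨z, rfl⟩ : ∃ z, n = 15 + x + 5 + z := ⟨n - (15 + x + 5), by ring⟩
  have hx : 0 ≤ x := by linarith
  have hz : 0 ≤ z := by linarith
  rw [← neg_pos]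
  unfold N4
  ring_nf
  positivity

lemma TT_s2_5 (a n : ℝ) (ha : 15 ≤ a) (hn : a + 5 ≤ n) : 0 < TT 2 a n 5 := by
  have h1 : 0 < 2 * n - 1 := by linarith
  have h0 : 0 < n := by linarith
  have ha' : 0 < a := by linarith
  have e : TT 2 a n 5 = (4 * (a*n+5) * (5*(a*n+4) - 2*(2*n-1)*(a+1))) / ((a*n) * (2*(2*n-1)*(a+1))) := by
    rw [eq_div_iff (by positivity)]
    have k0 := h0.ne'
    have k1 := ha'.ne'
    have k2 := h1.ne'
    have k4 : a + 1 ≠ 0 := by positivity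
    simp only [TT, Tc, TY, Finset.sum_range_succ, Finset.prod_range_succ, Finset.sum_range_zero, Finset.prod_range_zero]
    push_cast
    simp only [sub_self, neg_zero, zero_div, mul_zero, zero_mul, add_zero, sub_zero, zero_add, one_mul]
    field_simp
    ring
  rw [e]
  have : 0 < 5*(a*n+4) - 2*(2*n-1)*(a+1) := by nlinarith
  positivity

lemma TT_sign (a s : ℕ) (n : ℝ) (hs : 2 ≤ s) (ha : 7 ≤ a) (has : 17 ≤ a + s) (hn : (a : ℝ) + s + 3 ≤ n) :
    ∃ u : ℕ, TT s a n u * TT s a n (u + 1) < 0 := by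
  have ha' : (7 : ℝ) ≤ a := by exact_mod_cast ha
  have hs' : (2 : ℝ) ≤ s := by exact_mod_cast hs
  rcases Nat.eq_or_lt_of_le hs with h | h
  · subst h
    have ha2 : (15 : ℝ) ≤ a := by exact_mod_cast (show 15 ≤ a by omega)
    push_cast at hn ⊢
    exact ⟨4, mul_neg_of_neg_of_pos (TT_s2_4 a n ha2 (by linarith)) (TT_s2_5 a n ha2 (by linarith))⟩
  · refine ⟨3, ?_⟩
    have key : N3 s a n < 0 ∧ 0 < N4 s a n := by
      obtain ⟨z, rfl⟩ : ∃ z, n = 2 + z := ⟨n - 2, by ring⟩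
      have hz : 0 < z := by linarith
      rcases Nat.lt_or_ge s 10 with h10 | h10
      · have hx : (0 : ℝ) ≤ (a : ℝ) - (17 - s) := by
          have : (17 : ℝ) ≤ a + s := by exact_mod_cast has
          linarith
        have := N34_small s h (by omega) ((a : ℝ) - (17 - s)) z hx hz
        rwa [show (17 : ℝ) - s + ((a : ℝ) - (17 - s)) = a by ring] at this
      · have hy : (0 : ℝ) ≤ (s : ℝ) - 10 := by
          have : (10 : ℝ) ≤ s := by exact_mod_cast h10
          linarith
        have e1 := N3_big ((a : ℝ) - 7) ((s : ℝ) - 10) z (by linarith) hy hz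
        have e2 := N4_big ((a : ℝ) - 7) ((s : ℝ) - 10) z (by linarith) hy hz
        rw [show (10 : ℝ) + (s - 10) = s by ring, show (7 : ℝ) + (a - 7) = a by ring] at e1 e2
        exact ⟨e1, e2⟩
    obtain ⟨D, hD, e⟩ := TT4 s a n hs' (by linarith) (by linarith)
    refine mul_neg_of_neg_of_pos (TT3 s a n hs' (by linarith) (by linarith) key.1) ?_
    rw [e]
    exact div_pos key.2 hD

lemma card_between (C E : Finset α) (n : ℕ) (hCE : C ⊆ E) (hn : C.card ≤ n) :
    ((E.powersetCard n).filter (fun X => C ⊆ X)).card = (E.card - C.card).choose (n - C.card) := by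
  rw [← Finset.card_sdiff_of_subset hCE, ← Finset.card_powersetCard]
  refine Finset.card_bij' (fun X _ => X \ C) (fun X _ => X ∪ C) ?_ ?_ ?_ ?_
  · intro X hX
    rw [Finset.mem_filter, Finset.mem_powersetCard] at hX
    rw [Finset.mem_powersetCard]
    refine ⟨Finset.sdiff_subset_sdiff hX.1.1 (Finset.Subset.refl _), ?_⟩
    rw [Finset.card_sdiff_of_subset hX.2, hX.1.2]
  · intro X hX
    rw [Finset.mem_powersetCard] at hX
    rw [Finset.mem_filter, Finset.mem_powersetCard]
    have hdis : Disjoint X C := Finset.disjoint_of_subset_left hX.1 Finset.sdiff_disjoint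
    refine ⟨⟨Finset.union_subset (hX.1.trans Finset.sdiff_subset) hCE, ?_⟩,
      Finset.subset_union_right⟩
    rw [Finset.card_union_of_disjoint hdis, hX.2]; omega
  · intro X hX
    rw [Finset.mem_filter] at hX
    exact Finset.sdiff_union_of_subset hX.2
  · intro X hX
    rw [Finset.mem_powersetCard] at hX
    have hdis : Disjoint X C := Finset.disjoint_of_subset_left hX.1 Finset.sdiff_disjoint
    exact Finset.union_sdiff_cancel_right hdis

lemma card_above {k V : ℕ} (hv : Fintype.card α = k + V) (S : Finset α) (r e : ℕ)
    (hS : S.card = k + e) :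
    ((((univ : Finset α).powersetCard (k + r)).filter (fun E => S ⊆ E)).card : ℝ) = Jh V r e := by
  unfold Jh
  split_ifs with h
  · rw [card_between S univ (k + r) (Finset.subset_univ _) (by omega), Finset.card_univ, hv, hS]
    congr 2 <;> omega
  · rw [Finset.filter_eq_empty_iff.2, Finset.card_empty, Nat.cast_zero]
    intro E hE hSE
    rw [Finset.mem_powersetCard] at hE
    have := Finset.card_le_card hSE
    omega

noncomputable def Jbeta (V g s t : ℕ) : ℝ := (-1 : ℝ) ^ (s - t) * ((V - 1 - (g + t)).choose (s - t) : ℝ)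

lemma dcount {k V : ℕ} (hv : Fintype.card α = k + V) (g s : ℕ) (hs : g + s < V)
    (C B : Lev α k) :
    ((((univ : Finset α).powersetCard (k + g)).filter
      (fun X => C.1 ⊆ X ∧ (X \ B.1).card ≤ g + s)).card : ℝ)
    = ∑ t ∈ range (s + 1), Jbeta V g s t * ((g + t).choose g : ℝ) * Jh V (g + t) (C.1 \ B.1).card := by
  have hXB : ∀ X : Finset α, X.card = k + g → g ≤ (X \ B.1).card ∧ (X \ B.1).card ≤ V ∧
      (X ∪ B.1).card = k + (X \ B.1).card := by
    intro X hX
    have h1 := Finset.card_sdiff_add_card_inter X B.1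
    have h2 : (X ∩ B.1).card ≤ B.1.card := Finset.card_le_card Finset.inter_subset_right
    have h3 := Finset.card_sdiff_add_card X B.1
    have h4 := Finset.card_le_univ (X ∪ B.1)
    have := B.2
    refine ⟨by omega, by omega, by omega⟩
  have hCB : (C.1 ∪ B.1).card = k + (C.1 \ B.1).card := by
    have h3 := Finset.card_sdiff_add_card C.1 B.1
    have := B.2
    omega
  rw [← Finset.filter_filter, Finset.card_filter]
  push_cast
  have h1 : ∀ X ∈ ((univ : Finset α).powersetCard (k + g)).filter (fun X => C.1 ⊆ X),
      (if (X \ B.1).card ≤ g + s then (1 : ℝ) else 0) = ∑ t ∈ range (s + 1), Jbeta V g s t *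
        ∑ E ∈ (univ : Finset α).powersetCard (k + (g + t)), (if X ∪ B.1 ⊆ E then (1 : ℝ) else 0) := by
    intro X hX
    rw [Finset.mem_filter, Finset.mem_powersetCard] at hX
    obtain ⟨a1, a2, a3⟩ := hXB X hX.1.2
    rw [← vand' V g s _ a1 a2 hs]
    apply Finset.sum_congr rfl
    intro t _
    rw [← card_above hv (X ∪ B.1) (g + t) _ a3, Finset.card_filter, Jbeta]
    push_cast
    rfl
  rw [Finset.sum_congr rfl h1, Finset.sum_comm]
  apply Finset.sum_congr rfl
  intro t _
  rw [← Finset.mul_sum, mul_assoc]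
  congr 1
  rw [Finset.sum_comm, ← card_above hv (C.1 ∪ B.1) (g + t) _ hCB, Finset.card_filter]
  push_cast
  rw [Finset.mul_sum]
  apply Finset.sum_congr rfl
  intro E hE
  rw [Finset.mem_powersetCard] at hE
  split_ifs with hsub
  · rw [mul_one]
    have hCE : C.1 ⊆ E := Finset.subset_union_left.trans hsub
    have hBE : B.1 ⊆ E := Finset.subset_union_right.trans hsub
    have := card_between C.1 E (k + g) hCE (by rw [C.2]; omega)
    rw [hE.2, C.2, show k + (g + t) - k = g + t by omega, show k + g - k = g by omega] at this
    rw [← this, ← Finset.sum_filter, Finset.sum_const, nsmul_eq_mul, mul_one]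
    congr 2
    ext X
    simp only [mem_filter, mem_powersetCard, Finset.union_subset_iff, Finset.subset_univ, true_and]
    tauto
  · rw [mul_zero]
    apply Finset.sum_eq_zero
    intro X hX
    rw [Finset.mem_filter] at hX
    rw [if_neg]
    intro h
    apply hsub
    rw [Finset.union_subset_iff] at h ⊢
    exact ⟨hX.2.trans h.1, h.2⟩

/-- the fundamental equation -/
lemma fund {k V : ℕ} (hv : Fintype.card α = k + V) (g s : ℕ) (hs : g + s < V)
    (S : Finset (Lev α k))
    (hS : ∀ X : Finset α, X.card = k + g → (S.filter (fun B => (X \ B.1).card ≤ g + s)).card = 1)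
    (C : Lev α k) :
    ∑ B ∈ S, ∑ t ∈ range (s + 1), Jbeta V g s t * ((g + t).choose g : ℝ) * Jh V (g + t) (C.1 \ B.1).card
     = (V.choose g : ℝ) := by
  rw [Finset.sum_congr rfl (fun B _ => (dcount hv g s hs C B).symm)]
  have h1 : ∀ B ∈ S, ((((univ : Finset α).powersetCard (k + g)).filter
      (fun X => C.1 ⊆ X ∧ (X \ B.1).card ≤ g + s)).card : ℝ)
      = ∑ X ∈ ((univ : Finset α).powersetCard (k + g)).filter (fun X => C.1 ⊆ X),
        if (X \ B.1).card ≤ g + s then (1 : ℝ) else 0 := by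
    intro B _
    rw [← Finset.filter_filter, Finset.card_filter]; push_cast; rfl
  rw [Finset.sum_congr rfl h1, Finset.sum_comm]
  have h2 : ∀ X ∈ ((univ : Finset α).powersetCard (k + g)).filter (fun X => C.1 ⊆ X),
      ∑ B ∈ S, (if (X \ B.1).card ≤ g + s then (1 : ℝ) else 0) = 1 := by
    intro X hX
    rw [Finset.mem_filter, Finset.mem_powersetCard] at hX
    have := hS X hX.1.2
    rw [← Finset.sum_filter, Finset.sum_const, this]; simp
  rw [Finset.sum_congr rfl h2, Finset.sum_const, nsmul_eq_mul, mul_one,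
    card_between C.1 univ (k + g) (Finset.subset_univ _) (by rw [C.2]; omega), Finset.card_univ, hv, C.2]
  congr 2 <;> omega

/-! ### Polynomials in the Johnson Laplacian -/

noncomputable def Jz (k V : ℕ) (r : ℕ) : ℝ := ((k : ℝ) + r + 1) * ((V : ℝ) - r)

noncomputable def JPhi (k V r : ℕ) : Polynomial ℝ :=
  ∏ l ∈ range r, (Polynomial.C (Jz k V l) - Polynomial.X)

noncomputable abbrev JL (α : Type*) [Fintype α] [DecidableEq α] (k V : ℕ) :
    Matrix (Lev α k) (Lev α k) ℝ := JM α k (Jell k V)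

lemma JL_herm (k V : ℕ) : (JL α k V).IsHermitian := by
  ext C B
  simp only [Matrix.conjTranspose_apply, JM, Matrix.of_apply, star_trivial]
  rw [Jcard_symm]

lemma JM_one {k : ℕ} (h : ℕ → ℝ) (h0 : h 0 = 1) (h1 : ∀ e, 0 < e → h e = 0) : JM α k h = 1 := by
  ext C B
  rw [Matrix.one_apply]
  simp only [JM, Matrix.of_apply]
  split_ifs with hCB
  · rw [(Jzero_iff C B).2 hCB, h0]
  · exact h1 _ (Nat.pos_of_ne_zero (fun h => hCB ((Jzero_iff C B).1 h)))

lemma aeval_JPhi {k V : ℕ} (hv : Fintype.card α = k + V) (r : ℕ) :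
    Polynomial.aeval (JL α k V) (JPhi k V r) = ((r.factorial : ℝ) ^ 2) • JM α k (Jh V r) := by
  induction r with
  | zero =>
    simp only [JPhi, Finset.prod_range_zero, map_one, Nat.factorial_zero, Nat.cast_one, one_pow,
      one_smul]
    rw [JM_one]
    · simp [Jh]
    · intro e he
      simp only [Jh]
      rw [if_neg (by omega)]
  | succ r ih =>
    rw [JPhi, Finset.prod_range_succ, mul_comm, map_mul]
    change _ * Polynomial.aeval (JL α k V) (JPhi k V r) = _
    rw [ih, map_sub, Polynomial.aeval_C, Polynomial.aeval_X, mul_smul_comm, sub_mul,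
      ← Algebra.smul_def, Jmul hv]
    ext C B
    have := Jh_rec k V r (C.1 \ B.1).card (Jle_V hv C B)
    simp only [Matrix.smul_apply, Matrix.sub_apply, JM, Matrix.of_apply, smul_eq_mul, Jz]
    rw [this, Nat.factorial_succ]
    push_cast
    ring

lemma JL_pow {k V : ℕ} (hv : Fintype.card α = k + V) (r : ℕ) :
    ∃ h : ℕ → ℝ, (JL α k V) ^ r = JM α k h ∧ (∀ e, r < e → h e = 0) ∧ h r ≠ 0 := by
  induction r with
  | zero =>
    refine ⟨fun e => if e = 0 then 1 else 0, ?_, ?_, by simp⟩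
    · rw [pow_zero, JM_one]
      · simp
      · intro e he; simp [he.ne']
    · intro e he; simp [he.ne']
  | succ r ih =>
    obtain ⟨h, h1, h2, h3⟩ := ih
    refine ⟨JLam k V h, ?_, ?_, ?_⟩
    · rw [pow_succ', h1, Jmul hv]
    · intro e he
      simp only [JLam]
      rw [h2 e (by omega), h2 (e - 1) (by omega), h2 (e + 1) (by omega)]
      ring
    · simp only [JLam]
      rw [h2 (r + 1) (by omega), h2 (r + 1 + 1) (by omega), Nat.add_sub_cancel]
      have : (((r + 1 : ℕ) : ℝ)) ^ 2 ≠ 0 := by positivity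
      simp only [zero_sub, sub_zero, mul_zero, add_zero]
      exact mul_ne_zero this (neg_ne_zero.2 h3)

lemma JL_aeval_far {k V : ℕ} (hv : Fintype.card α = k + V) (f : Polynomial ℝ) (C B : Lev α k)
    (h : f.natDegree < (C.1 \ B.1).card) : (Polynomial.aeval (JL α k V) f) C B = 0 := by
  rw [Polynomial.aeval_eq_sum_range, Matrix.sum_apply]
  apply Finset.sum_eq_zero
  intro r hr
  have hr' := Finset.mem_range.1 hr
  obtain ⟨h', h1, h2, _⟩ := JL_pow hv r
  rw [Matrix.smul_apply, h1]
  simp only [JM, Matrix.of_apply]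
  rw [h2 _ (by omega), smul_zero]

lemma JL_aeval_top {k V : ℕ} (hv : Fintype.card α = k + V) (f : Polynomial ℝ) (hf : f ≠ 0)
    (C B : Lev α k)
    (h : f.natDegree = (C.1 \ B.1).card) : (Polynomial.aeval (JL α k V) f) C B ≠ 0 := by
  rw [Polynomial.aeval_eq_sum_range, Matrix.sum_apply, Finset.sum_range_succ,
    Finset.sum_eq_zero, zero_add]
  · obtain ⟨h', h1, h2, h3⟩ := JL_pow (α := α) hv f.natDegree
    rw [Matrix.smul_apply, h1]
    simp only [JM, Matrix.of_apply]
    rw [← h, smul_eq_mul]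
    exact mul_ne_zero (Polynomial.leadingCoeff_ne_zero.2 hf) h3
  · intro r hr
    have hr' := Finset.mem_range.1 hr
    obtain ⟨h', h1, h2, _⟩ := JL_pow (α := α) hv r
    rw [Matrix.smul_apply, h1]
    simp only [JM, Matrix.of_apply]
    rw [h2 _ (by omega), smul_zero]

lemma JL_row {k V : ℕ} (hv : Fintype.card α = k + V) (C : Lev α k) : ∑ D, JL α k V C D = 0 := by
  have h := Jmul hv (fun _ => 1)
  have h1 := congrFun (congrFun h C) C
  rw [Matrix.mul_apply] at h1
  simp only [JM, Matrix.of_apply, JLam, mul_one, sub_self, mul_zero, add_zero] at h1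
  simpa [JM] using h1

lemma JPhi_top {k V : ℕ} (hv : Fintype.card α = k + V) :
    Polynomial.aeval (JL α k V) (JPhi k V (V + 1)) = 0 := by
  rw [aeval_JPhi hv]
  ext C B
  have := Jle_V hv C B
  simp only [Matrix.smul_apply, JM, Matrix.of_apply, Jh, Matrix.zero_apply]
  rw [if_pos (by omega), Nat.choose_eq_zero_of_lt (by omega)]
  simp

noncomputable def Jc (V g s t : ℕ) : ℝ :=
  Jbeta V g s t * ((g + t).choose g : ℝ) / ((g + t).factorial : ℝ) ^ 2

noncomputable def JQ (k V g s : ℕ) : Polynomial ℝ :=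
  ∑ t ∈ range (s + 1), Polynomial.C (Jc V g s t) *
    ∏ l ∈ range t, (Polynomial.C (Jz k V (g + l)) - Polynomial.X)

lemma JPhi_add (k V g t : ℕ) : JPhi k V (g + t) =
    JPhi k V g * ∏ l ∈ range t, (Polynomial.C (Jz k V (g + l)) - Polynomial.X) := by
  rw [JPhi, Finset.prod_range_add]; rfl

lemma aeval_PQ {k V : ℕ} (hv : Fintype.card α = k + V) (g s : ℕ) (C B : Lev α k) :
    (Polynomial.aeval (JL α k V) (JPhi k V g * JQ k V g s)) C B =
    ∑ t ∈ range (s + 1), Jbeta V g s t * ((g + t).choose g : ℝ) * Jh V (g + t) (C.1 \ B.1).card := by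
  have e : JPhi k V g * JQ k V g s =
      ∑ t ∈ range (s + 1), Polynomial.C (Jc V g s t) * JPhi k V (g + t) := by
    rw [JQ, Finset.mul_sum]
    apply Finset.sum_congr rfl
    intro t _
    rw [JPhi_add]; ring
  rw [e, map_sum, Matrix.sum_apply]
  apply Finset.sum_congr rfl
  intro t _
  rw [map_mul, Polynomial.aeval_C, ← Algebra.smul_def, aeval_JPhi hv]
  simp only [Matrix.smul_apply, JM, Matrix.of_apply, Jc, smul_eq_mul]
  have : ((g + t).factorial : ℝ) ≠ 0 := by positivity
  field_simp

lemma natDegree_lin (z : ℝ) : (Polynomial.C z - Polynomial.X : Polynomial ℝ).natDegree ≤ 1 := by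
  refine (Polynomial.natDegree_sub_le _ _).trans ?_
  simp

lemma lin_ne (z : ℝ) : (Polynomial.C z - Polynomial.X : Polynomial ℝ) ≠ 0 := by
  rw [← neg_ne_zero, neg_sub]
  exact Polynomial.X_sub_C_ne_zero z

lemma natDegree_prodlin (r : ℕ) (z : ℕ → ℝ) :
    (∏ l ∈ range r, (Polynomial.C (z l) - Polynomial.X : Polynomial ℝ)).natDegree ≤ r := by
  refine (Polynomial.natDegree_prod_le _ _).trans ?_
  refine (Finset.sum_le_sum (fun l _ => natDegree_lin (z l))).trans ?_
  simp

lemma natDegree_JQ (k V g s : ℕ) : (JQ k V g s).natDegree ≤ s := by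
  refine Polynomial.natDegree_sum_le_of_forall_le _ _ ?_
  intro t ht
  have := Finset.mem_range.1 ht
  refine (Polynomial.natDegree_C_mul_le _ _).trans ?_
  exact (natDegree_prodlin t _).trans (by omega)

lemma Jc_rec (V g s m t : ℕ) (hV : V = g + 1 + s * (m + 2)) (ht : t < s) :
    Jc V g s (t + 1) = Jc V g s t *
      (-((s : ℝ) - t) / (((s : ℝ) * ((m : ℝ) + 2) - t) * ((g : ℝ) + 1 + t) * (t + 1))) := by
  obtain ⟨q, rfl⟩ : ∃ q, s = t + 1 + q := ⟨s - (t + 1), by omega⟩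
  obtain ⟨Z, hZ⟩ : ∃ Z, (t + 1 + q) * (m + 2) = t + 1 + Z :=
    ⟨(t + 1 + q) * (m + 2) - (t + 1), by
      have : t + 1 ≤ (t + 1 + q) * (m + 2) := by nlinarith
      omega⟩
  have hZr : ((t + 1 + q : ℕ) : ℝ) * ((m : ℝ) + 2) = t + 1 + Z := by exact_mod_cast hZ
  rw [hZr]
  rw [hZ] at hV
  unfold Jc Jbeta
  have e1 : V - 1 - (g + t) = Z + 1 := by omega
  have e2 : V - 1 - (g + (t + 1)) = Z := by omega
  rw [e1, e2, show t + 1 + q - t = q + 1 by omega, show t + 1 + q - (t + 1) = q by omega,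
    ← Nat.add_assoc g t 1, Nat.factorial_succ]
  have f1 : ((Z : ℝ) + 1) * Z.choose q = (Z + 1).choose (q + 1) * (q + 1) := by
    exact_mod_cast Nat.add_one_mul_choose_eq Z q
  have f2 : ((g + t + 1).choose g : ℝ) * (t + 1) = (g + t).choose g * (g + t + 1) := by
    have := Nat.add_one_mul_choose_eq (g + t) t
    have h1 : (g + t).choose t = (g + t).choose g := by
      rw [← Nat.choose_symm_of_eq_add]; ring
    have h2 : (g + t + 1).choose (t + 1) = (g + t + 1).choose g := by
      rw [← Nat.choose_symm_of_eq_add]; ring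
    rw [h1, h2] at this
    have h3 : (((g + t + 1) * (g + t).choose g : ℕ) : ℝ) = ((g + t + 1).choose g * (t + 1) : ℕ) := by
      rw [this]
    push_cast at h3
    linarith
  have g1 : (Z.choose q : ℝ) = (Z + 1).choose (q + 1) * (q + 1) / (Z + 1) := by
    rw [eq_div_iff (by positivity)]; linarith
  have g2 : ((g + t + 1).choose g : ℝ) = (g + t).choose g * (g + t + 1) / (t + 1) := by
    rw [eq_div_iff (by positivity)]; linarith
  rw [g1, g2]
  push_cast
  have n1 : (Z : ℝ) + 1 ≠ 0 := by positivity
  have n2 : (t : ℝ) + 1 ≠ 0 := by positivity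
  have n3 : (g : ℝ) + t + 1 ≠ 0 := by positivity
  have n4 : (g : ℝ) + 1 + t ≠ 0 := by positivity
  have n5 : ((g + t).factorial : ℝ) ≠ 0 := by positivity
  have n6 : (t : ℝ) + 1 + Z - t ≠ 0 := by
    rw [show (t : ℝ) + 1 + Z - t = Z + 1 by ring]; exact n1
  rw [show (t : ℝ) + 1 + Z - t = Z + 1 by ring, show (g : ℝ) + 1 + t = g + t + 1 by ring]
  field_simp
  ring

lemma Jc_eq (V g s m : ℕ) (hV : V = g + 1 + s * (m + 2)) (t : ℕ) (ht : t ≤ s) :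
    Jc V g s t = Jc V g s 0 * Tc s ((g : ℝ) + 1) ((m : ℝ) + 2) t := by
  induction t with
  | zero => simp [Tc]
  | succ t ih =>
    rw [Jc_rec V g s m t hV (by omega), ih (by omega), Tc, Tc, Finset.prod_range_succ]
    ring

lemma Jc_zero_ne (V g s m : ℕ) (hV : V = g + 1 + s * (m + 2)) : Jc V g s 0 ≠ 0 := by
  unfold Jc Jbeta
  have : 0 < (V - 1 - (g + 0)).choose (s - 0) := by
    apply Nat.choose_pos
    have : s ≤ s * (m + 2) := by nlinarith
    omega
  have h2 : 0 < (g + 0).choose g := by simp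
  have : ((V - 1 - (g + 0)).choose (s - 0) : ℝ) ≠ 0 := by exact_mod_cast this.ne'
  have h2' : ((g + 0).choose g : ℝ) ≠ 0 := by exact_mod_cast h2.ne'
  have : ((-1 : ℝ)) ^ (s - 0) ≠ 0 := pow_ne_zero _ (by norm_num)
  have : ((g + 0).factorial : ℝ) ≠ 0 := by positivity
  positivity

lemma JQ_eval (k V g s m : ℕ) (hV : V = g + 1 + s * (m + 2)) (hk : k = V + (g + 1) * m) (u : ℕ) :
    (JQ k V g s).eval (Jz k V (g + u)) =
      Jc V g s 0 * TT s ((g : ℝ) + 1) ((m : ℝ) + 2) u := by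
  have hkr : (k : ℝ) = V + ((g : ℝ) + 1) * m := by rw [hk]; push_cast; ring
  have e1 : (JQ k V g s).eval (Jz k V (g + u)) = ∑ t ∈ range (s + 1),
      Jc V g s 0 * (Tc s ((g : ℝ) + 1) ((m : ℝ) + 2) t * TY ((g : ℝ) + 1) ((m : ℝ) + 2) u t) := by
    rw [JQ, Polynomial.eval_finsetSum]
    apply Finset.sum_congr rfl
    intro t ht
    have := Finset.mem_range.1 ht
    rw [Polynomial.eval_mul, Polynomial.eval_C, Polynomial.eval_prod,
      Jc_eq V g s m hV t (by omega), mul_assoc]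
    congr 2
    unfold TY
    apply Finset.prod_congr rfl
    intro l _
    simp only [Polynomial.eval_sub, Polynomial.eval_C, Polynomial.eval_X, Jz]
    rw [hkr]
    push_cast
    ring
  rw [e1, ← Finset.mul_sum]
  congr 1
  unfold TT
  have h1 : ∑ t ∈ range (s + 1), Tc s ((g : ℝ) + 1) ((m : ℝ) + 2) t * TY ((g : ℝ) + 1) ((m : ℝ) + 2) u t
      = ∑ t ∈ range (s + u + 1), Tc s ((g : ℝ) + 1) ((m : ℝ) + 2) t * TY ((g : ℝ) + 1) ((m : ℝ) + 2) u t := by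
    apply Finset.sum_subset
    · intro x hx; rw [Finset.mem_range] at hx ⊢; omega
    · intro x _ hx
      rw [Finset.mem_range] at hx
      have : Tc s ((g : ℝ) + 1) ((m : ℝ) + 2) x = 0 := by
        unfold Tc
        apply Finset.prod_eq_zero (i := s) (Finset.mem_range.2 (by omega))
        simp
      rw [this, zero_mul]
  have h2 : ∑ t ∈ range (u + 1), Tc s ((g : ℝ) + 1) ((m : ℝ) + 2) t * TY ((g : ℝ) + 1) ((m : ℝ) + 2) u t
      = ∑ t ∈ range (s + u + 1), Tc s ((g : ℝ) + 1) ((m : ℝ) + 2) t * TY ((g : ℝ) + 1) ((m : ℝ) + 2) u t := by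
    apply Finset.sum_subset
    · intro x hx; rw [Finset.mem_range] at hx ⊢; omega
    · intro x _ hx
      rw [Finset.mem_range] at hx
      have : TY ((g : ℝ) + 1) ((m : ℝ) + 2) u x = 0 := by
        unfold TY
        apply Finset.prod_eq_zero (i := u) (Finset.mem_range.2 (by omega))
        simp
      rw [this, mul_zero]
  rw [h1, h2]

lemma Jz_anti (k V : ℕ) (hkV : V ≤ k) {w w' : ℕ} (h : w ≤ w') : Jz k V w' ≤ Jz k V w := by
  unfold Jz
  have h1 : (w : ℝ) ≤ w' := by exact_mod_cast h
  have h2 : (V : ℝ) ≤ k := by exact_mod_cast hkV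
  have h3 : (0 : ℝ) ≤ w := by positivity
  nlinarith [mul_nonneg (sub_nonneg.2 h1) (by linarith : (0:ℝ) ≤ (k : ℝ) - V + 1 + w + w')]

/-- Number of roots of `JQ` in the spectrum. -/
lemma JQ_roots (k V g s m : ℕ) (hV : V = g + 1 + s * (m + 2)) (hk : k = V + (g + 1) * m)
    (hs : 2 ≤ s) (hg : 6 ≤ g) (hgs : 16 ≤ g + s) (hm : g + s + 2 ≤ m) (S1 : Finset ℝ)
    (hS1 : ∀ x ∈ S1, (JQ k V g s).eval x = 0 ∧ ∃ w, x = Jz k V w) : S1.card + 1 ≤ s := by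
  have hmr : (g : ℝ) + s + 2 ≤ m := by exact_mod_cast hm
  obtain ⟨u, hu⟩ := TT_sign (g + 1) s ((m : ℝ) + 2) hs (by omega) (by omega) (by push_cast; linarith)
  push_cast at hu
  have hc := Jc_zero_ne V g s m hV
  set Q := JQ k V g s with hQ
  have hneg : Q.eval (Jz k V (g + u)) * Q.eval (Jz k V (g + (u + 1))) < 0 := by
    rw [hQ, JQ_eval k V g s m hV hk, JQ_eval k V g s m hV hk]
    have : 0 < Jc V g s 0 ^ 2 := by positivity
    nlinarith
  have hkV : V ≤ k := by rw [hk]; omega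
  have hle : Jz k V (g + (u + 1)) ≤ Jz k V (g + u) := Jz_anti k V hkV (by omega)
  obtain ⟨ξ, hξ, hξ0⟩ : ∃ ξ ∈ Set.Icc (Jz k V (g + (u + 1))) (Jz k V (g + u)), Q.eval ξ = 0 := by
    have hcont : ContinuousOn (fun x => Q.eval x) (Set.uIcc (Jz k V (g + (u + 1))) (Jz k V (g + u))) :=
      Q.continuous.continuousOn
    have := intermediate_value_uIcc hcont
    have h0 : (0 : ℝ) ∈ Set.uIcc (Q.eval (Jz k V (g + (u + 1)))) (Q.eval (Jz k V (g + u))) := by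
      rw [Set.mem_uIcc]
      rcases mul_neg_iff.1 hneg with h | h
      · left; exact ⟨h.2.le, h.1.le⟩
      · right; exact ⟨h.1.le, h.2.le⟩
    obtain ⟨ξ, h1, h2⟩ := this h0
    rw [Set.uIcc_of_le hle] at h1
    exact ⟨ξ, h1, h2⟩
  have hne1 : ξ ≠ Jz k V (g + u) := by
    rintro rfl; rw [hξ0, zero_mul] at hneg; exact lt_irrefl _ hneg
  have hne2 : ξ ≠ Jz k V (g + (u + 1)) := by
    rintro rfl; rw [hξ0, mul_zero] at hneg; exact lt_irrefl _ hneg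
  have hξS : ξ ∉ S1 := by
    intro h
    obtain ⟨_, w, hw⟩ := hS1 ξ h
    rcases Nat.lt_or_ge (g + u) w with h1 | h1
    · have := Jz_anti k V hkV (show g + (u + 1) ≤ w by omega)
      rw [← hw] at this
      exact hne2 (le_antisymm this hξ.1)
    · have := Jz_anti k V hkV h1
      rw [← hw] at this
      exact hne1 (le_antisymm hξ.2 this)
  have hQ0 : Q ≠ 0 := by
    intro h; rw [h] at hneg; simp at hneg
  have hsub : insert ξ S1 ⊆ Q.roots.toFinset := by
    intro x hx
    rw [Multiset.mem_toFinset, Polynomial.mem_roots hQ0, Polynomial.IsRoot]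
    rcases Finset.mem_insert.1 hx with rfl | h
    · exact hξ0
    · exact (hS1 x h).1
  have h1 := Finset.card_le_card hsub
  rw [Finset.card_insert_of_notMem hξS] at h1
  exact (h1.trans (Multiset.toFinset_card_le _)).trans
    ((Polynomial.card_roots' Q).trans (natDegree_JQ k V g s))

lemma exists_dist {k V D : ℕ} (hv : Fintype.card α = k + V) (B : Lev α k) (h1 : D ≤ k) (h2 : D ≤ V) :
    ∃ C : Lev α k, (C.1 \ B.1).card = D := by
  obtain ⟨T, hT, hTc⟩ := Finset.exists_subset_card_eq (show D ≤ B.1.card by rw [B.2]; exact h1)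
  obtain ⟨W, hW, hWc⟩ := Finset.exists_subset_card_eq (show D ≤ (B.1ᶜ).card by
    rw [Finset.card_compl, B.2, hv]; omega)
  have hd : Disjoint W B.1 := Finset.disjoint_left.2 (fun x hx => Finset.mem_compl.1 (hW hx))
  refine ⟨⟨(B.1 \ T) ∪ W, ?_⟩, ?_⟩
  · rw [Finset.card_union_of_disjoint (hd.symm.mono_left Finset.sdiff_subset),
      Finset.card_sdiff_of_subset hT, B.2]
    omega
  · have : ((B.1 \ T) ∪ W) \ B.1 = W := by
      ext x
      have : x ∈ W → x ∉ B.1 := fun h => Finset.disjoint_left.1 hd h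
      simp only [mem_sdiff, mem_union]
      tauto
    rw [this, hWc]

lemma core {k V : ℕ} (hv : Fintype.card α = k + V) (g s m : ℕ)
    (hV : V = g + 1 + s * (m + 2)) (hk : k = V + (g + 1) * m)
    (hs : 2 ≤ s) (hg : 6 ≤ g) (hgs : 16 ≤ g + s) (hm : g + s + 2 ≤ m)
    (S : Finset (Lev α k)) (hne : S.Nonempty)
    (hS : ∀ X : Finset α, X.card = k + g → (S.filter (fun B => (X \ B.1).card ≤ g + s)).card = 1)
    (hsep : ∀ B ∈ S, ∀ C ∈ S, B ≠ C → g + 2 * s ≤ (B.1 \ C.1).card) : False := by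
  classical
  have hVs : 2 * s + g + 1 ≤ V := by rw [hV]; nlinarith
  have hkV : V ≤ k := by rw [hk]; omega
  set Q := JQ k V g s with hQ
  set S1 : Finset ℝ := ((range (V + 1)).image (Jz k V)).filter (fun x => Q.eval x = 0) with hS1
  have hcard : S1.card + 1 ≤ s := by
    apply JQ_roots k V g s m hV hk hs hg hgs hm
    intro x hx
    rw [hS1, Finset.mem_filter, Finset.mem_image] at hx
    obtain ⟨⟨w, _, hw⟩, h⟩ := hx
    exact ⟨h, w, hw.symm⟩
  set E : Polynomial ℝ := ∏ z ∈ S1, (Polynomial.X - Polynomial.C z) with hE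
  set f : Polynomial ℝ := Polynomial.X * JPhi k V g * E ^ 2 with hf
  have hPhi0 : JPhi k V g ≠ 0 := by
    rw [JPhi, Finset.prod_ne_zero_iff]
    intro l _; exact lin_ne _
  have hE0 : E ≠ 0 := by
    rw [hE, Finset.prod_ne_zero_iff]
    intro z _; exact Polynomial.X_sub_C_ne_zero z
  have hf0 : f ≠ 0 := mul_ne_zero (mul_ne_zero Polynomial.X_ne_zero hPhi0) (pow_ne_zero _ hE0)
  have hEdeg : E.natDegree ≤ S1.card := by
    rw [hE]
    refine (Polynomial.natDegree_prod_le _ _).trans ?_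
    simp
  have hdeg : f.natDegree + 1 ≤ g + 2 * s := by
    have a1 : f.natDegree ≤ (Polynomial.X * JPhi k V g).natDegree + (E ^ 2).natDegree :=
      Polynomial.natDegree_mul_le
    have a2 : (Polynomial.X * JPhi k V g).natDegree ≤
        (Polynomial.X : Polynomial ℝ).natDegree + (JPhi k V g).natDegree :=
      Polynomial.natDegree_mul_le
    have a3 : (JPhi k V g).natDegree ≤ g := natDegree_prodlin g _
    have a4 : (E ^ 2).natDegree ≤ 2 * E.natDegree := Polynomial.natDegree_pow_le
    rw [Polynomial.natDegree_X] at a2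
    omega
  have hroot : ∀ x, (JPhi k V (V + 1)).eval x = 0 → ∃ w, w ≤ V ∧ x = Jz k V w := by
    intro x hx
    rw [JPhi, Polynomial.eval_prod, Finset.prod_eq_zero_iff] at hx
    obtain ⟨w, hw, h⟩ := hx
    refine ⟨w, by have := Finset.mem_range.1 hw; omega, ?_⟩
    simp only [Polynomial.eval_sub, Polynomial.eval_C, Polynomial.eval_X] at h
    linarith
  have hconst : ∀ C, ∑ B ∈ S, (Polynomial.aeval (JL α k V) (JPhi k V g * Q)) C B = (V.choose g : ℝ) := by
    intro C
    rw [← fund hv g s (by omega) S hS C]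
    apply Finset.sum_congr rfl
    intro B _
    rw [hQ, aeval_PQ hv]
  have hR : ∀ C, ∑ B ∈ S, (Polynomial.aeval (JL α k V)
      (Polynomial.X * (JPhi k V g * Q))) C B = 0 := by
    intro C
    rw [map_mul, Polynomial.aeval_X]
    simp only [Matrix.mul_apply]
    rw [Finset.sum_comm]
    simp only [← Finset.mul_sum, hconst]
    rw [← Finset.sum_mul, JL_row hv, zero_mul]
  have hconcl := spec_key (JL α k V) (JL_herm k V) (JPhi k V (V + 1))
    (Polynomial.X * (JPhi k V g * Q)) f S (JPhi_top hv) hR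
    (by
      intro x hx
      obtain ⟨w, hw, rfl⟩ := hroot x hx
      rw [hf, Polynomial.eval_mul, Polynomial.eval_mul, Polynomial.eval_X, Polynomial.eval_pow]
      refine mul_nonneg (mul_nonneg ?_ ?_) (sq_nonneg _)
      · unfold Jz
        have : (w : ℝ) ≤ V := by exact_mod_cast hw
        have : (0 : ℝ) ≤ (V : ℝ) - w := by linarith
        positivity
      · rw [JPhi, Polynomial.eval_prod]
        rcases Nat.lt_or_ge w g with h | h
        · rw [Finset.prod_eq_zero (Finset.mem_range.2 h)]
          simp
        · apply Finset.prod_nonneg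
          intro l hl
          have := Finset.mem_range.1 hl
          simp only [Polynomial.eval_sub, Polynomial.eval_C, Polynomial.eval_X]
          exact sub_nonneg.2 (Jz_anti k V hkV (by omega)))
    (by
      intro x hx hRx
      obtain ⟨w, hw, rfl⟩ := hroot x hx
      rw [hf, Polynomial.eval_mul, Polynomial.eval_mul, Polynomial.eval_pow]
      rw [Polynomial.eval_mul, Polynomial.eval_mul] at hRx
      rcases mul_eq_zero.1 hRx with h | h
      · rw [h]; ring
      · rcases mul_eq_zero.1 h with h | h
        · rw [h]; ring
        · have hEz : E.eval (Jz k V w) = 0 := by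
            rw [hE, Polynomial.eval_prod]
            apply Finset.prod_eq_zero (i := Jz k V w)
            · rw [hS1, Finset.mem_filter]
              exact ⟨Finset.mem_image_of_mem _ (Finset.mem_range.2 (by omega)), h⟩
            · simp
          rw [hEz]; ring)
    (by
      intro B hB C hC hBC
      apply JL_aeval_far hv
      have := hsep B hB C hC hBC
      omega)
  obtain ⟨B, hB⟩ := hne
  obtain ⟨C, hC⟩ := exists_dist hv B (show f.natDegree ≤ k by omega) (show f.natDegree ≤ V by omega)
  exact JL_aeval_top hv f hf0 C B hC.symm (hconcl B hB C)

theorem beta_design_kd_lower_both (𝓑 : Finset (Finset α)) (v k d i : ℕ)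
    (hB : IsBetaDesign 𝓑 v k d i) (hv : v ≤ 2 * k) (hkd : i + 2 ≤ k - d)
    (hd : 0 < d) (hi : 17 ≤ i)
    (hB' : IsBetaDesign 𝓑 v k d (i + 1)) :
    2 * i - 6 ≤ k - d ∧ k - d ≤ 2 * i := by
  obtain ⟨s, hs⟩ : ∃ s, k = d + i + s := ⟨k - d - i, by omega⟩
  obtain ⟨V, hV⟩ : ∃ V, v = k + V := ⟨v - k, by have := hB.1.2.2.2.1; omega⟩
  obtain ⟨m, hdm, hVm, him⟩ := loc_main hB hB' hs hV (by omega) hd (by omega)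
  have hsi : s ≤ i := by
    by_contra h
    have : (i + 1) * m ≤ s * m := Nat.mul_le_mul_right m (by omega)
    have h2 : (i + 1) * m = i * m + m := by ring
    omega
  refine ⟨?_, by omega⟩
  by_contra hlow
  obtain ⟨g, hg⟩ : ∃ g, i = g + 1 + s := ⟨i - 1 - s, by omega⟩
  have hcard : Fintype.card α = k + V := by rw [hB.1.1, hV]
  obtain ⟨B0, hB0, _⟩ := hB.1.2.2.2.2.2.2
  have hk' : ∀ B ∈ 𝓑, B.card = k := hB.1.2.2.2.2.1
  refine core hcard g s m ?_ ?_ (by omega) (by omega) (by omega) (by omega)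
    (univ.filter (fun B : Lev α k => B.1 ∈ 𝓑)) ⟨⟨B0, hk' B0 hB0⟩, by simp [hB0]⟩ ?_ ?_
  · rw [hVm, hg]; ring
  · rw [hs, hdm, hVm, hg]; ring
  · intro X hX
    have hXc : X.card = d + 2 * i - 1 := by omega
    obtain ⟨B, ⟨hBm, hBX⟩, hu⟩ := hB.2.2.2 X hXc
    rw [Finset.card_eq_one]
    have iff : ∀ C : Finset α, (X \ C).card ≤ g + s ↔ d + i ≤ (X ∩ C).card := by
      intro C
      have := Finset.card_sdiff_add_card_inter X C
      omega
    refine ⟨⟨B, hk' B hBm⟩, ?_⟩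
    ext D
    rw [Finset.mem_filter, Finset.mem_filter, Finset.mem_singleton, iff]
    constructor
    · rintro ⟨⟨_, h1⟩, h2⟩
      exact Subtype.ext (hu D.1 ⟨h1, h2⟩)
    · rintro rfl
      exact ⟨⟨Finset.mem_univ _, hBm⟩, hBX⟩
  · intro B hBm C hCm hne
    rw [Finset.mem_filter] at hBm hCm
    have h1 := hB.1.2.2.2.2.2.1 B.1 hBm.2 C.1 hCm.2 (fun h => hne (Subtype.ext h))
    have h2 := Finset.card_sdiff_add_card_inter B.1 C.1
    rw [B.2] at h2
    omega
end

section
/- Let 𝓓 = (Ω, 𝓑) be a β(i) design with parameter (v, k, d). If i ≥ 2, then S₁ is not empty, i.e. there exists a (d+2(i−2))-element subset X of Ω with |X ∩ B| ≤ d+i−2 for every block B ∈ 𝓑. -/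
open Finset

variable {α : Type*} [Fintype α] [DecidableEq α]

/-- **Lemma 2.1 (1).** If `𝓑` is a `β(i)` design with parameter `(v, k, d)` and `i ≥ 2`,
then `S₁` is nonempty: there is a `(d + 2(i-2))`-element subset `X` of `Ω` with
`|X ∩ B| ≤ d + i - 2` for every block `B ∈ 𝓑`. -/
theorem S1_nonempty (𝓑 : Finset (Finset α)) (v k d i : ℕ)
    (hB : IsBetaDesign 𝓑 v k d i) (hi : 2 ≤ i) :
    ∃ X : Finset α, X.card = d + 2 * (i - 2) ∧ ∀ B ∈ 𝓑, (X ∩ B).card ≤ d + i - 2 := by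
  obtain ⟨⟨hv, hb, hdk, hkv, hk, hd, B, hBm, C, hCm, hBC, hBCd⟩, h1, h2, h⟩ := hB
  -- there is a set of size `d + 2i - 1`, hence `d + i ≤ k`
  have hki : d + i ≤ k := by
    obtain ⟨X, -, hX⟩ := Finset.exists_subset_card_eq
      (s := (Finset.univ : Finset α)) (n := d + 2 * i - 1) (by rw [Finset.card_univ]; omega)
    obtain ⟨A, ⟨hA, hAX⟩, -⟩ := h X hX
    have := Finset.card_le_card (Finset.inter_subset_right : X ∩ A ⊆ A)
    rw [hk A hA] at this
    omega
  -- the second block has at least `i` points outside `B`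
  have hout : i - 2 ≤ (C \ B).card := by
    have e1 := Finset.card_sdiff_add_card_inter C B
    rw [Finset.inter_comm, hBCd, hk C hCm] at e1
    omega
  obtain ⟨P, hPB, hP⟩ := Finset.exists_subset_card_eq (s := B) (n := d + i - 2)
    (by rw [hk B hBm]; omega)
  obtain ⟨Q, hQ, hQc⟩ := Finset.exists_subset_card_eq hout
  have hQB : Disjoint Q B := Finset.disjoint_of_subset_left hQ Finset.sdiff_disjoint
  have hPQ : Disjoint P Q := (Finset.disjoint_of_subset_right hPB hQB).symm
  refine ⟨P ∪ Q, by rw [Finset.card_union_of_disjoint hPQ]; omega, fun A hA => ?_⟩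
  rw [Finset.union_inter_distrib_right]
  have hu := Finset.card_union_le (P ∩ A) (Q ∩ A)
  by_cases hAB : A = B
  · subst hAB
    have e : Q ∩ A = ∅ := Finset.disjoint_iff_inter_eq_empty.mp hQB
    have := Finset.card_le_card (Finset.inter_subset_left : P ∩ A ⊆ P)
    rw [e, Finset.card_empty] at hu
    rw [e]
    omega
  · have a1 : (P ∩ A).card ≤ (B ∩ A).card :=
      Finset.card_le_card (Finset.inter_subset_inter_right hPB)
    have a2 := hd B hBm A hA (Ne.symm hAB)
    have a3 := Finset.card_le_card (Finset.inter_subset_left : Q ∩ A ⊆ Q)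
    omega
end

section
/- Let 𝓓 = (Ω, 𝓑) be a β(i) design with parameter (v, k, d). If k−d ≥ i+1, then S₂ is not empty, i.e. there exists a (d+2(i+1))-element subset X of Ω with |X ∩ B| ≤ d+i+1 for every block B ∈ 𝓑. -/
open Finset

variable {α : Type*} [Fintype α] [DecidableEq α]

/-- **Lemma 2.1 (2).** If `𝓑` is a `β(i)` design with parameter `(v, k, d)` and
`k - d ≥ i + 1`, then `S₂` is nonempty: there is a `(d + 2(i+1))`-element subset `X` of
`Ω` with `|X ∩ B| ≤ d + i + 1` for every block `B ∈ 𝓑`. -/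
theorem S2_nonempty (𝓑 : Finset (Finset α)) (v k d i : ℕ)
    (hB : IsBetaDesign 𝓑 v k d i) (hkd : i + 1 ≤ k - d) :
    ∃ X : Finset α, X.card = d + 2 * (i + 1) ∧ ∀ B ∈ 𝓑, (X ∩ B).card ≤ d + i + 1 := by
  obtain ⟨⟨-, -, hdk, -, hk, hd, B, hBm, C, hCm, hBC, hcard⟩, -⟩ := hB
  have hkB := hk B hBm
  have hkC := hk C hCm
  have hCB : (C \ B).card = k - d := by
    have := Finset.card_sdiff_add_card_inter C B
    rw [Finset.inter_comm] at this
    omega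
  obtain ⟨P, hPB, hP⟩ := Finset.exists_subset_card_eq (s := B) (n := d + i + 1) (by omega)
  obtain ⟨Q, hQC, hQ⟩ := Finset.exists_subset_card_eq (s := C \ B) (n := i + 1) (by omega)
  have hQB : Disjoint Q B := Finset.disjoint_of_subset_left hQC Finset.sdiff_disjoint
  have hPQ : Disjoint P Q := (Finset.disjoint_of_subset_right hPB hQB).symm
  refine ⟨P ∪ Q, by rw [Finset.card_union_of_disjoint hPQ]; omega, ?_⟩
  intro E hE
  by_cases h : B = E
  · subst h
    have : (P ∪ Q) ∩ B ⊆ P := by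
      intro x hx
      simp only [Finset.mem_inter, Finset.mem_union] at hx
      rcases hx with ⟨h1 | h1, h2⟩
      · exact h1
      · exact absurd h2 (Finset.disjoint_left.mp hQB h1)
    have := Finset.card_le_card this
    omega
  · have h1 : (P ∪ Q) ∩ E ⊆ (B ∩ E) ∪ Q := by
      intro x hx
      simp only [Finset.mem_inter, Finset.mem_union] at hx ⊢
      rcases hx with ⟨h1 | h1, h2⟩
      · exact Or.inl ⟨hPB h1, h2⟩
      · exact Or.inr h1
    have h2 := Finset.card_le_card h1
    have h3 := Finset.card_union_le (B ∩ E) Q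
    have h4 := hd B hBm E hE h
    omega
end

section
/- Let 𝓓 = (Ω, 𝓑) be a β(i) design with parameter (v, k, d), set c = k−d, and fix a block B ∈ 𝓑. Let μ_d = |{C ∈ 𝓑 : |C ∩ B| = d}|. Then μ_d = C(v−k, i)·C(k, d+i−1) / ( C(c, i)·C(c, i−1) ); in particular μ_d is independent of the choice of B ∈ 𝓑. -/
open Finset

variable {α : Type*} [Fintype α] [DecidableEq α]

theorem count_between {β : Type*} [DecidableEq β] (A B : Finset β) (hAB : A ⊆ B) (j : ℕ) :
    ((B.powersetCard (A.card + j)).filter (fun S => A ⊆ S)).card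
      = (B.card - A.card).choose j := by
  rw [← card_sdiff_of_subset hAB, ← card_powersetCard]
  refine card_nbij' (fun S => S \ A) (fun U => A ∪ U) ?_ ?_ ?_ ?_
  · intro S hS
    simp only [coe_filter, mem_powersetCard, Set.mem_ofPred_eq, mem_coe] at hS ⊢
    refine ⟨sdiff_subset_sdiff hS.1.1 (Subset.refl _), ?_⟩
    rw [card_sdiff_of_subset hS.2]; omega
  · intro U hU
    simp only [coe_filter, mem_powersetCard, Set.mem_ofPred_eq, mem_coe] at hU ⊢
    refine ⟨⟨union_subset hAB (hU.1.trans sdiff_subset), ?_⟩, subset_union_left⟩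
    rw [card_union_of_disjoint, hU.2]
    exact (disjoint_sdiff).mono_right hU.1
  · intro S hS
    simp only [coe_filter, mem_powersetCard, Set.mem_ofPred_eq] at hS
    exact union_sdiff_of_subset hS.2
  · intro U hU
    simp only [mem_powersetCard, mem_coe] at hU
    exact union_sdiff_cancel_left ((disjoint_sdiff).mono_right hU.1)

/-- **Proposition 5.2.** Let `𝓑` be a `β(i)` design with parameter `(v, k, d)`,
`c = k - d`, and fix a block `B ∈ 𝓑`.  Then
`μ_d = |{C ∈ 𝓑 : |C ∩ B| = d}| = C(v-k, i) C(k, d+i-1) / (C(c, i) C(c, i-1))`;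
in particular `μ_d` does not depend on the choice of `B`. -/
theorem mu_d_formula (𝓑 : Finset (Finset α)) (v k d i c : ℕ)
    (hB : IsBetaDesign 𝓑 v k d i) (hc : c = k - d) (B : Finset α) (hBmem : B ∈ 𝓑) :
    ((𝓑.filter (fun C => (C ∩ B).card = d)).card : ℝ) =
      (((v - k).choose i : ℝ) * (k.choose (d + i - 1) : ℝ))
        / ((c.choose i : ℝ) * (c.choose (i - 1) : ℝ)) := by
  obtain ⟨⟨hv, -, hdk, hkv, hk, hd, -⟩, hi, hiv, hX⟩ := hB
  have hic : i ≤ c := by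
    obtain ⟨X, -, hXc⟩ := exists_subset_card_eq (s := (univ : Finset α)) (n := d + 2 * i - 1)
      (by rw [card_univ, hv]; omega)
    obtain ⟨C, ⟨hC, h⟩, -⟩ := hX X hXc
    have h1 := card_le_card (inter_subset_right : X ∩ C ⊆ C)
    rw [hk C hC] at h1
    omega
  have key : (𝓑.filter (fun C => (C ∩ B).card = d)).card * (c.choose i * c.choose (i - 1))
      = (v - k).choose i * k.choose (d + i - 1) := by
    let P := B.powersetCard (d + i - 1) ×ˢ (Bᶜ).powersetCard i
    have hP : P.card = (v - k).choose i * k.choose (d + i - 1) := by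
      simp only [P, card_product, card_powersetCard, card_compl, hk B hBmem, hv]
      ring
    rw [← hP]
    have := sum_card_bipartiteAbove_eq_sum_card_bipartiteBelow
      (s := 𝓑.filter (fun C => (C ∩ B).card = d)) (t := P)
      (fun C p => C ∩ B ⊆ p.1 ∧ p.2 ⊆ C \ B)
    rw [sum_const_nat (m := c.choose i * c.choose (i - 1)), sum_const_nat (m := 1)] at this
    · rw [this, mul_one]
    · rintro ⟨S, T⟩ hp
      simp only [P, mem_product, mem_powersetCard] at hp
      obtain ⟨⟨hS, hSc⟩, hT, hTc⟩ := hp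
      have hTB : Disjoint T B := by
        rw [← subset_compl_iff_disjoint_right]; exact hT
      have hST : Disjoint S T := hTB.symm.mono_left hS
      obtain ⟨C, ⟨hC, h⟩, huniq⟩ := hX (S ∪ T) (by
        rw [card_union_of_disjoint hST]; omega)
      rw [card_eq_one]
      refine ⟨C, ?_⟩
      ext D
      simp only [bipartiteBelow, mem_filter, mem_singleton]
      constructor
      · rintro ⟨⟨hD, hDd⟩, h1, h2⟩
        refine huniq D ⟨hD, ?_⟩
        have h3 : (D ∩ B) ∪ T ⊆ (S ∪ T) ∩ D :=
          union_subset (subset_inter (h1.trans subset_union_left) inter_subset_left)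
            (subset_inter subset_union_right (h2.trans sdiff_subset))
        have h4 := card_le_card h3
        rw [card_union_of_disjoint (hTB.symm.mono_left inter_subset_right)] at h4
        omega
      · rintro rfl
        rw [union_inter_distrib_right, card_union_of_disjoint
          (hST.mono inter_subset_left inter_subset_left)] at h
        have hTD : (T ∩ D).card ≤ T.card := card_le_card inter_subset_left
        have hne : D ≠ B := by
          rintro rfl
          rw [disjoint_iff_inter_eq_empty.mp hTB, card_empty] at h
          have := card_le_card (inter_subset_left : S ∩ D ⊆ S)
          omega
        have hDB := hd D hC B hBmem hne
        have hsub : S ∩ D ⊆ D ∩ B := subset_inter inter_subset_right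
          (inter_subset_left.trans hS)
        have hle := card_le_card hsub
        have e1 := eq_of_subset_of_card_le hsub (by omega)
        have e2 := eq_of_subset_of_card_le (inter_subset_left : T ∩ D ⊆ T) (by omega)
        refine ⟨⟨hC, by omega⟩, ?_, ?_⟩
        · rw [← e1]; exact inter_subset_left
        · exact subset_sdiff.mpr ⟨inter_eq_left.mp e2, hTB⟩
    · intro C hC
      simp only [mem_filter] at hC
      obtain ⟨hC, hCd⟩ := hC
      have e : P.bipartiteAbove (fun (C : Finset α) p => C ∩ B ⊆ p.1 ∧ p.2 ⊆ C \ B) C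
          = ((B.powersetCard ((C ∩ B).card + (i - 1))).filter (fun S => C ∩ B ⊆ S)) ×ˢ
            (C \ B).powersetCard i := by
        have hdi : (C ∩ B).card + (i - 1) = d + i - 1 := by omega
        rw [hdi]
        ext ⟨S, T⟩
        simp only [bipartiteAbove, P, mem_filter, mem_product, mem_powersetCard]
        have : T ⊆ C \ B → T ⊆ Bᶜ := fun h x hx => by
          have := h hx
          simp at this ⊢
          exact this.2
        tauto
      have hs := card_sdiff_add_card_inter C B
      rw [hk C hC, hCd] at hs
      have hs' : (C \ B).card = c := by omega
      rw [e, card_product, count_between _ _ inter_subset_right, card_powersetCard, hs', hCd,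
        hk B hBmem, ← hc, mul_comm]
  have h1 : 0 < c.choose i := Nat.choose_pos hic
  have h2 : 0 < c.choose (i - 1) := Nat.choose_pos (by omega)
  rw [eq_div_iff (by positivity)]
  exact_mod_cast key
end
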